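/- Atomic CQ entailment is undecidable both over fus+trans knowledge bases and over fes+trans knowledge bases; that is, it is undecidable, given a fact base F, a rule set R consisting of a finite unification set (respectively, a finite expansion set) of existential rules together with transitivity rules, and an atomic Boolean conjunctive query Q, whether F, R ⊨ Q. -/

import Mathlib

set_option autoImplicit false

/-! ## First-order vocabulary: terms, atoms, existential rules -/

/-- Terms: variables and constants, both indexed by natural numbers. -/
inductive FTerm where
  | var : ℕ → FTerm
  | const : ℕ → FTerm
deriving DecidableEq

instance : Inhabited FTerm := ⟨.var 0⟩

def FTerm.equivSum : FTerm ≃ ℕ ⊕ ℕ where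
  toFun t := match t with | .var n => .inl n | .const n => .inr n
  invFun s := match s with | .inl n => .var n | .inr n => .const n
  left_inv t := by cases t <;> rfl
  right_inv s := by cases s <;> rfl

instance : Primcodable FTerm := Primcodable.ofEquiv (ℕ ⊕ ℕ) FTerm.equivSum

/-- A (function-free) atom: a predicate applied to a list of terms. -/
structure FAtom where
  pred : ℕ
  args : List FTerm
deriving DecidableEq

def FAtom.equivProd : FAtom ≃ ℕ × List FTerm where
  toFun a := (a.pred, a.args)
  invFun p := ⟨p.1, p.2⟩
  left_inv a := rfl
  right_inv p := rfl

instance : Primcodable FAtom := Primcodable.ofEquiv (ℕ × List FTerm) FAtom.equivProd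

/-- An existential rule `B → H`, given by its body and head (finite conjunctions of atoms).
Variables occurring in the head but not in the body are (implicitly) existentially
quantified; all other variables are universally quantified. -/
structure ERule where
  body : List FAtom
  head : List FAtom
deriving DecidableEq

def ERule.equivProd : ERule ≃ List FAtom × List FAtom where
  toFun r := (r.body, r.head)
  invFun p := ⟨p.1, p.2⟩
  left_inv r := rfl
  right_inv p := rfl

instance : Primcodable ERule := Primcodable.ofEquiv (List FAtom × List FAtom) ERule.equivProd

/-! ## Semantics -/

/-- A first-order interpretation. -/
structure Interp where
  Dom : Type
  inh : Nonempty Dom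
  rel : ℕ → List Dom → Prop
  cst : ℕ → Dom

def FTerm.eval (I : Interp) (ν : ℕ → I.Dom) : FTerm → I.Dom
  | .var n => ν n
  | .const n => I.cst n

def FAtom.sat (I : Interp) (ν : ℕ → I.Dom) (a : FAtom) : Prop :=
  I.rel a.pred (a.args.map (FTerm.eval I ν))

/-- Satisfaction of a Boolean conjunctive query (existential closure of a conjunction). -/
def satCQ (I : Interp) (Q : List FAtom) : Prop := ∃ ν, ∀ a ∈ Q, a.sat I ν

def satFacts (I : Interp) (F : List FAtom) : Prop := ∀ ν, ∀ a ∈ F, a.sat I ν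

def atomsVars (l : List FAtom) : Set ℕ := {v | ∃ a ∈ l, FTerm.var v ∈ a.args}
def atomsTerms (l : List FAtom) : Set FTerm := {t | ∃ a ∈ l, t ∈ a.args}
def atomsPreds (l : List FAtom) : Set ℕ := {q | ∃ a ∈ l, a.pred = q}
def rulesPreds (Rs : List ERule) : Set ℕ := {q | ∃ r ∈ Rs, q ∈ atomsPreds (r.body ++ r.head)}
def atomsConsts (l : List FAtom) : Set ℕ := {c | FTerm.const c ∈ atomsTerms l}

/-- Frontier variables of a rule. -/
def ERule.frontierV (R : ERule) : Set ℕ := atomsVars R.body ∩ atomsVars R.head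
/-- Existential variables of a rule. -/
def ERule.exV (R : ERule) : Set ℕ := atomsVars R.head \ atomsVars R.body

def ERule.sat (I : Interp) (R : ERule) : Prop :=
  ∀ ν, (∀ a ∈ R.body, a.sat I ν) →
    ∃ ν', (∀ v ∈ atomsVars R.body, ν' v = ν v) ∧ ∀ a ∈ R.head, a.sat I ν'

/-- First-order entailment of a Boolean CQ from a knowledge base. -/
def entails (F : List FAtom) (Rs : List ERule) (Q : List FAtom) : Prop :=
  ∀ I : Interp, satFacts I F → (∀ r ∈ Rs, r.sat I) → satCQ I Q

/-- First-order entailment of a union of Boolean CQs. -/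
def entailsUCQ (F : List FAtom) (Rs : List ERule) (Qs : List (List FAtom)) : Prop :=
  ∀ I : Interp, satFacts I F → (∀ r ∈ Rs, r.sat I) → ∃ Q ∈ Qs, satCQ I Q

def FAtom.isGround (a : FAtom) : Prop := ∀ t ∈ a.args, ∃ c, t = FTerm.const c
def isFactBase (F : List FAtom) : Prop := ∀ a ∈ F, a.isGround

/-! ## Substitutions and piece-unifiers -/

def FTerm.subst (σ : ℕ → FTerm) : FTerm → FTerm
  | .var n => σ n
  | .const n => .const n

def FAtom.subst (σ : ℕ → FTerm) (a : FAtom) : FAtom := ⟨a.pred, a.args.map (FTerm.subst σ)⟩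

/-- A piece-unifier of a CQ `Q` with a rule `R`, presented by a unifying substitution `σ`
(obtained from the admissible partition of the terms of `piece ∪ hpiece`):
`σ(piece) = σ(hpiece)` and every term merged with an existential variable of `R`
is a variable of the piece not occurring in the rest of `Q`. -/
structure PieceUnifier (Q : List FAtom) (R : ERule) where
  piece : List FAtom
  hpiece : List FAtom
  σ : ℕ → FTerm
  piece_ne : piece ≠ []
  piece_sub : ∀ a ∈ piece, a ∈ Q
  hpiece_sub : ∀ a ∈ hpiece, a ∈ R.head
  unif : {x : FAtom | ∃ b ∈ piece, x = b.subst σ} = {x : FAtom | ∃ b ∈ hpiece, x = b.subst σ}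
  exCond : ∀ z ∈ R.exV, ∀ t ∈ atomsTerms (piece ++ hpiece),
      FTerm.subst σ t = σ z → t ≠ FTerm.var z →
      ∃ v, t = FTerm.var v ∧ FTerm.var v ∈ atomsTerms piece ∧
        FTerm.var v ∉ atomsTerms (Q.filter (fun a => decide (a ∉ piece)))

def pieceUnifiable (Q : List FAtom) (R : ERule) : Prop := Nonempty (PieceUnifier Q R)

/-- `R₂` depends on `R₁` if there is a piece-unifier of the body of `R₂` with the head of `R₁`. -/
def ruleDependsOn (R₂ R₁ : ERule) : Prop := pieceUnifiable R₂.body R₁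

/-- A rule set is aGRD if its graph of rule dependencies (edge from `R₁` to `R₂`
whenever `R₂` depends on `R₁`) is acyclic. -/
def isAGRD (Rs : List ERule) : Prop :=
  ∀ r ∈ Rs, ¬ Relation.TransGen (fun r₁ r₂ => r₁ ∈ Rs ∧ r₂ ∈ Rs ∧ ruleDependsOn r₂ r₁) r r

/-- The (classical) direct rewriting of `Q` with `R` w.r.t. a piece-unifier `μ`
is `σ(Q ∖ piece) ∪ σ(body R)` (as a set of atoms). -/
def directRewriting (Q Q' : List FAtom) (R : ERule) : Prop :=
  ∃ μ : PieceUnifier Q R,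
    {x : FAtom | x ∈ Q'} =
      {x | ∃ b ∈ Q.filter (fun a => decide (a ∉ μ.piece)), x = b.subst μ.σ} ∪
      {x | ∃ b ∈ R.body, x = b.subst μ.σ}

/-- `Q'` is a rewriting of `Q` w.r.t. the rule set `Rs`: a finite sequence of direct rewritings. -/
def isRewriting (Rs : List ERule) (Q Q' : List FAtom) : Prop :=
  Relation.ReflTransGen (fun q q' => ∃ r ∈ Rs, directRewriting q q' r) Q Q'

/-! ## Transitivity and linear rules -/

/-- `R` is the transitivity rule `p(x,y) ∧ p(y,z) → p(x,z)` for predicate `p`. -/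
def isTransitivityRuleOn (p : ℕ) (R : ERule) : Prop :=
  ∃ x y z : ℕ, x ≠ y ∧ y ≠ z ∧ x ≠ z ∧
    R.body = [⟨p, [.var x, .var y]⟩, ⟨p, [.var y, .var z]⟩] ∧
    R.head = [⟨p, [.var x, .var z]⟩]

def isTransitivityRule (R : ERule) : Prop := ∃ p, isTransitivityRuleOn p R

/-- A canonical transitivity rule for predicate `p`. -/
def transRule (p : ℕ) : ERule :=
  ⟨[⟨p, [.var 0, .var 1]⟩, ⟨p, [.var 1, .var 2]⟩], [⟨p, [.var 0, .var 2]⟩]⟩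

/-- A linear rule: single-atom body and no constants. -/
def isLinearRule (R : ERule) : Prop :=
  (∃ a, R.body = [a]) ∧ ∀ t ∈ atomsTerms (R.body ++ R.head), ∀ c, t ≠ FTerm.const c

/-- `I` is a universal model of the KB `(F, Rs)`:
it is a model, and it satisfies exactly the CQs entailed by the KB. -/
def isUniversalModel (I : Interp) (F : List FAtom) (Rs : List ERule) : Prop :=
  satFacts I F ∧ (∀ r ∈ Rs, r.sat I) ∧ ∀ Q : List FAtom, (satCQ I Q ↔ entails F Rs Q)

/-- A finite expansion set: every KB `(F, Rs)` has a finite universal model. -/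
def isFES (Rs : List ERule) : Prop :=
  ∀ F, isFactBase F → ∃ I : Interp, Finite I.Dom ∧ isUniversalModel I F Rs

/-- A finite unification set: for every CQ `Q` there is a finite set `S` of rewritings of
`Q` w.r.t. `Rs` such that for every fact base `F`, `F, Rs ⊨ Q` iff `F ⊨ Q'` for some `Q' ∈ S`. -/
def isFUS (Rs : List ERule) : Prop :=
  ∀ Q : List FAtom, ∃ S : List (List FAtom),
    (∀ Q' ∈ S, isRewriting Rs Q Q') ∧
    ∀ F, isFactBase F → (entails F Rs Q ↔ ∃ Q' ∈ S, entails F [] Q')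



/-! ## The fixed rule set -/

namespace UD

abbrev A1 (p i : ℕ) : FAtom := ⟨p, [.var i]⟩
abbrev A2 (p i j : ℕ) : FAtom := ⟨p, [.var i, .var j]⟩

/-- Predicates: `E = 0`, `L = 1`, `S = 2`, `T = 3`, `D = 4`, `H = 5`, `G = 6`. -/
def rhoBody : List FAtom :=
  [A1 0 0, A2 1 0 1, A2 2 0 2, A2 3 0 3, A1 0 4, A2 1 4 5, A2 2 4 2, A2 3 4 6,
   A1 0 2, A1 0 3, A1 0 6, ⟨4, [.var 1, .var 5, .var 7, .var 8, .var 9, .var 10]⟩,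
   A2 1 10 7, A2 1 10 8, A2 1 10 9, A2 3 10 3, A2 2 10 6, A2 3 10 6,
   A2 2 10 10, A2 3 10 10, A2 1 10 10]

def rhoHead : List FAtom :=
  [A1 0 11, A1 0 12, A1 0 13, A1 0 14, A2 1 11 7, A2 1 12 8, A2 1 13 9,
   A2 3 11 3, A2 2 12 6, A2 3 13 6, A2 2 11 15, A2 2 13 15, A2 2 10 15, A2 2 15 14,
   A2 3 12 16, A2 3 10 16, A2 3 16 14,
   A2 2 17 17, A2 2 17 18, A2 3 17 17, A2 3 17 18, A2 1 17 17, A2 1 17 18]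

def rho : ERule := ⟨rhoBody, rhoHead⟩

def goalBody : List FAtom :=
  [A1 0 0, A2 1 0 1, A2 2 0 2, A2 3 0 3, A1 0 2, A1 0 3, A1 5 1]

def aG : FAtom := ⟨6, []⟩

def goalR : ERule := ⟨goalBody, [aG]⟩
def tautE : ERule := ⟨[A1 0 0], [A1 0 0]⟩
def tautG : ERule := ⟨[aG], [aG]⟩
def addE : ERule := ⟨A1 0 19 :: rhoBody, [A1 0 19]⟩

def RS : List ERule := [rho, goalR, tautE, tautG, addE]

/-! ## The one-round chase -/

inductive Val where
  | c : ℕ → Val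
  | nl : (ℕ → ℕ) → ℕ → Val

def gs (τ : ℕ → ℕ) : ℕ → FTerm := fun j => .const (τ j)

def trig (R : ERule) (F : List FAtom) (τ : ℕ → ℕ) : Prop :=
  (∀ j, 11 ≤ j → τ j = 0) ∧ ∀ b ∈ R.body, b.subst (gs τ) ∈ F

def ev (τ : ℕ → ℕ) : FTerm → Val
  | .var j => if j < 11 then .c (τ j) else .nl τ j
  | .const n => .c n

def gv : FTerm → Val
  | .var _ => .c 0
  | .const n => .c n

def fRel (F : List FAtom) (p : ℕ) (l : List Val) : Prop :=
  ∃ a ∈ F, p = a.pred ∧ l = a.args.map gv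

def tRel (R : ERule) (τ : ℕ → ℕ) (p : ℕ) (l : List Val) : Prop :=
  ∃ a ∈ R.head, p = a.pred ∧ l = a.args.map (ev τ)

def JR (F : List FAtom) (p : ℕ) (l : List Val) : Prop :=
  fRel F p l ∨ (∃ τ, trig rho F τ ∧ tRel rho τ p l) ∨
    (∃ τ, trig goalR F τ ∧ tRel goalR τ p l)

abbrev J (F : List FAtom) : Interp where
  Dom := Val
  inh := ⟨.c 0⟩
  rel := JR F
  cst := Val.c

theorem fRel_iff {F : List FAtom} (hF : isFactBase F) (p : ℕ) (l : List Val) :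
    fRel F p l ↔ ∃ cs : List ℕ, l = cs.map Val.c ∧ (⟨p, cs.map FTerm.const⟩ : FAtom) ∈ F := by
  constructor
  · rintro ⟨⟨q, as⟩, ha, rfl, rfl⟩
    have hg := hF _ ha
    have : ∃ cs : List ℕ, as = cs.map FTerm.const := by
      clear ha
      induction as with
      | nil => exact ⟨[], rfl⟩
      | cons t ts ih =>
        obtain ⟨c, hc⟩ := hg t (by simp)
        obtain ⟨cs, hcs⟩ := ih (fun t' ht' => hg t' (by simp at ht' ⊢; right; exact ht'))
        exact ⟨c :: cs, by simp [hc, hcs]⟩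
    obtain ⟨cs, rfl⟩ := this
    exact ⟨cs, by simp [gv], ha⟩
  · rintro ⟨cs, rfl, h⟩
    exact ⟨_, h, rfl, by simp [gv]⟩

theorem J_facts {F : List FAtom} (hF : isFactBase F) : satFacts (J F) F := by
  intro ν a ha
  left
  refine ⟨a, ha, rfl, ?_⟩
  apply List.map_congr_left
  intro t ht
  obtain ⟨c, rfl⟩ := hF a ha t ht
  rfl

theorem J_const {F : List FAtom} {p : ℕ} {l : List Val} (h : JR F p l)
    (hl : ∀ v ∈ l, ∃ n, v = Val.c n) (hp : p ≠ 6) : fRel F p l := by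
  rcases h with h | ⟨τ, -, a, ha, rfl, rfl⟩ | ⟨τ, -, a, ha, rfl, rfl⟩
  · exact h
  · exfalso
    simp only [rho, rhoHead, List.mem_cons, List.not_mem_nil, or_false] at ha
    rcases ha with rfl | rfl | rfl | rfl | rfl | rfl | rfl | rfl | rfl | rfl | rfl | rfl | rfl |
      rfl | rfl | rfl | rfl | rfl | rfl | rfl | rfl | rfl | rfl <;> simp [ev] at hl
  · simp [goalR] at ha
    subst ha
    simp [aG] at hp

theorem J_E {F : List FAtom} {v : Val} (h : JR F 0 [v]) :
    (∃ n, v = .c n) ∨ ∃ τ, v = .nl τ 11 ∨ v = .nl τ 12 ∨ v = .nl τ 13 ∨ v = .nl τ 14 := by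
  rcases h with ⟨⟨q, as⟩, ha, h1, h2⟩ | ⟨τ, -, a, ha, h1, h2⟩ | ⟨τ, -, a, ha, h1, h2⟩
  · simp only at h1 h2
    rcases as with _ | ⟨t, _ | _⟩ <;> simp at h2
    subst h2
    left
    cases t <;> exact ⟨_, rfl⟩
  · simp only [rho, rhoHead, List.mem_cons, List.not_mem_nil, or_false] at ha
    rcases ha with rfl | rfl | rfl | rfl | rfl | rfl | rfl | rfl | rfl | rfl | rfl | rfl | rfl |
      rfl | rfl | rfl | rfl | rfl | rfl | rfl | rfl | rfl | rfl <;> simp [ev] at h1 h2 <;> simp [h2]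
  · simp [goalR, aG] at ha
    subst ha
    simp at h1

theorem fRel_c {F : List FAtom} {p : ℕ} {l : List Val} (h : fRel F p l) :
    ∀ v ∈ l, ∃ n, v = Val.c n := by
  obtain ⟨a, -, -, rfl⟩ := h
  intro v hv
  simp at hv
  obtain ⟨t, -, rfl⟩ := hv
  cases t <;> exact ⟨_, rfl⟩

theorem J_S {F : List FAtom} {v w : Val} (h : JR F 2 [v, w]) (hv : JR F 0 [v])
    (hw : JR F 0 [w]) : (∃ n m, v = .c n ∧ w = .c m) ∨ ∃ τ, v = .nl τ 12 := by
  rcases h with h | ⟨τ, -, a, ha, h1, h2⟩ | ⟨τ, -, a, ha, h1, h2⟩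
  · left
    have := fRel_c h
    obtain ⟨n, hn⟩ := this v (by simp)
    obtain ⟨m, hm⟩ := this w (by simp)
    exact ⟨n, m, hn, hm⟩
  · have h3 := J_E hv
    have h4 := J_E hw
    simp only [rho, rhoHead, List.mem_cons, List.not_mem_nil, or_false] at ha
    rcases ha with rfl | rfl | rfl | rfl | rfl | rfl | rfl | rfl | rfl | rfl | rfl | rfl | rfl |
      rfl | rfl | rfl | rfl | rfl | rfl | rfl | rfl | rfl | rfl <;> simp [ev] at h1 h2 <;>
      obtain ⟨rfl, rfl⟩ := h2 <;> simp at h3 h4 ⊢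
  · simp [goalR, aG] at ha
    subst ha
    simp at h1

theorem J_T {F : List FAtom} {v w : Val} (h : JR F 3 [v, w]) (hv : JR F 0 [v])
    (hw : JR F 0 [w]) :
    (∃ n m, v = .c n ∧ w = .c m) ∨ ∃ τ, v = .nl τ 11 ∨ v = .nl τ 13 := by
  rcases h with h | ⟨τ, -, a, ha, h1, h2⟩ | ⟨τ, -, a, ha, h1, h2⟩
  · left
    have := fRel_c h
    obtain ⟨n, hn⟩ := this v (by simp)
    obtain ⟨m, hm⟩ := this w (by simp)
    exact ⟨n, m, hn, hm⟩
  · have h3 := J_E hv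
    have h4 := J_E hw
    simp only [rho, rhoHead, List.mem_cons, List.not_mem_nil, or_false] at ha
    rcases ha with rfl | rfl | rfl | rfl | rfl | rfl | rfl | rfl | rfl | rfl | rfl | rfl | rfl |
      rfl | rfl | rfl | rfl | rfl | rfl | rfl | rfl | rfl | rfl <;> simp [ev] at h1 h2 <;>
      obtain ⟨rfl, rfl⟩ := h2 <;> simp at h3 h4 ⊢
  · simp [goalR, aG] at ha
    subst ha
    simp at h1

theorem J_ST {F : List FAtom} {f x y : Val} (hf : JR F 0 [f]) (hx : JR F 0 [x])
    (hy : JR F 0 [y]) (hS : JR F 2 [f, x]) (hT : JR F 3 [f, y]) :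
    ∃ n m k, f = .c n ∧ x = .c m ∧ y = .c k := by
  rcases J_S hS hf hx with ⟨n, m, rfl, rfl⟩ | ⟨τ, rfl⟩ <;>
    rcases J_T hT hf hy with ⟨n', k, h1, rfl⟩ | ⟨τ', h⟩
  · exact ⟨_, _, _, rfl, rfl, rfl⟩
  · simp at h
  · simp at h1
  · simp at h

theorem J_DH {F : List FAtom} {p : ℕ} {l : List Val} (hp : p = 4 ∨ p = 5)
    (h : JR F p l) : ∀ v ∈ l, ∃ n, v = Val.c n := by
  rcases h with h | ⟨τ, -, a, ha, h1, h2⟩ | ⟨τ, -, a, ha, h1, h2⟩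
  · exact fRel_c h
  · exfalso
    simp only [rho, rhoHead, List.mem_cons, List.not_mem_nil, or_false] at ha
    rcases ha with rfl | rfl | rfl | rfl | rfl | rfl | rfl | rfl | rfl | rfl | rfl | rfl | rfl |
      rfl | rfl | rfl | rfl | rfl | rfl | rfl | rfl | rfl | rfl <;> simp at h1 <;> omega
  · simp [goalR, aG] at ha
    subst ha
    simp at h1
    omega

/-- If all variables of the body atoms are mapped to constants then the body is matched in `F`. -/
theorem trig_of_const {F : List FAtom} (hF : isFactBase F) {R : ERule} (ν : ℕ → Val)
    (hb : ∀ a ∈ R.body, a.sat (J F) ν) (hp : ∀ a ∈ R.body, a.pred ≠ 6)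
    (hv : ∀ a ∈ R.body, ∀ t ∈ a.args, ∃ j, t = .var j ∧ j < 11 ∧ ∃ n, ν j = .c n) :
    ∃ τ, trig R F τ ∧ ∀ j ∈ atomsVars R.body, ν j = .c (τ j) := by
  classical
  let τ : ℕ → ℕ := fun j => if j < 11 then (match ν j with | .c n => n | _ => 0) else 0
  refine ⟨τ, ⟨?_, ?_⟩, ?_⟩
  · intro j hj
    simp [τ, Nat.not_lt.2 hj]
  · intro a ha
    have h1 := J_const (hb a ha) (by
      intro v hv'
      simp at hv'
      obtain ⟨t, ht, rfl⟩ := hv'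
      obtain ⟨j, rfl, -, n, hn⟩ := hv a ha t ht
      exact ⟨n, hn⟩) (hp a ha)
    rw [fRel_iff hF] at h1
    obtain ⟨cs, h1, h2⟩ := h1
    have h3 : a.subst (gs τ) = ⟨a.pred, cs.map FTerm.const⟩ := by
      simp only [FAtom.subst, FAtom.mk.injEq, true_and]
      have : a.args.map (FTerm.eval (J F) ν) =
          (a.args.map (FTerm.subst (gs τ))).map gv := by
        rw [List.map_map]
        apply List.map_congr_left
        intro t ht
        obtain ⟨j, rfl, hj, n, hn⟩ := hv a ha t ht
        simp [FTerm.eval, FTerm.subst, gs, gv, τ, hj, hn]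
      rw [this] at h1
      have h4 : ∀ (l : List FTerm) (cs : List ℕ), (∀ t ∈ l, ∃ n, t = .const n) →
          l.map gv = cs.map Val.c → l = cs.map FTerm.const := by
        intro l
        induction l with
        | nil => intro cs _ h; cases cs <;> simp_all
        | cons t ts ih =>
          intro cs hl h
          cases cs with
          | nil => simp at h
          | cons c cs =>
            obtain ⟨n, rfl⟩ := hl t (by simp)
            simp [gv] at h
            simp [h.1]
            exact ih cs (fun t' ht' => hl t' (by simp [ht'])) h.2
      apply h4 _ _ _ h1
      intro t ht
      simp at ht
      obtain ⟨t', ht', rfl⟩ := ht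
      obtain ⟨j, rfl, -⟩ := hv a ha t' ht'
      exact ⟨_, rfl⟩
    rw [h3]
    exact h2
  · rintro j ⟨a, ha, hj⟩
    obtain ⟨j', h, h1, n, hn⟩ := hv a ha _ hj
    cases h
    simp [τ, h1, hn]

theorem J_rho {F : List FAtom} (hF : isFactBase F) (ν : ℕ → Val)
    (hb : ∀ a ∈ rhoBody, a.sat (J F) ν) :
    ∃ τ, trig rho F τ ∧ ∀ j ∈ atomsVars rhoBody, ν j = .c (τ j) := by
  have hE : ∀ i, A1 0 i ∈ rhoBody → JR F 0 [ν i] := fun i h => hb _ h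
  have hS : ∀ i j, A2 2 i j ∈ rhoBody → JR F 2 [ν i, ν j] := fun i j h => hb _ h
  have hT : ∀ i j, A2 3 i j ∈ rhoBody → JR F 3 [ν i, ν j] := fun i j h => hb _ h
  have hD : JR F 4 [ν 1, ν 5, ν 7, ν 8, ν 9, ν 10] :=
    hb ⟨4, [.var 1, .var 5, .var 7, .var 8, .var 9, .var 10]⟩ (by simp [rhoBody])
  have hDc := J_DH (Or.inl rfl) hD
  obtain ⟨n0, n2, n3, h0, h2, h3⟩ := J_ST (hE 0 (by decide)) (hE 2 (by decide)) (hE 3 (by decide))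
    (hS 0 2 (by decide)) (hT 0 3 (by decide))
  obtain ⟨n4, _, n6, h4, _, h6⟩ := J_ST (hE 4 (by decide)) (hE 2 (by decide)) (hE 6 (by decide))
    (hS 4 2 (by decide)) (hT 4 6 (by decide))
  have key : ∀ j, j < 11 → ∃ n, ν j = .c n := by
    intro j hj
    interval_cases j
    · exact ⟨_, h0⟩
    · exact hDc _ (by simp)
    · exact ⟨_, h2⟩
    · exact ⟨_, h3⟩
    · exact ⟨_, h4⟩
    · exact hDc _ (by simp)
    · exact ⟨_, h6⟩
    all_goals exact hDc _ (by simp)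
  refine trig_of_const (R := rho) hF ν hb (by decide) ?_
  have : ∀ a ∈ rho.body, ∀ t ∈ a.args, ∃ j < 11, t = FTerm.var j := by decide
  intro a ha t ht
  obtain ⟨j, hj, rfl⟩ := this a ha t ht
  exact ⟨j, rfl, hj, key j hj⟩

theorem J_goal {F : List FAtom} (hF : isFactBase F) (ν : ℕ → Val)
    (hb : ∀ a ∈ goalBody, a.sat (J F) ν) :
    ∃ τ, trig goalR F τ ∧ ∀ j ∈ atomsVars goalBody, ν j = .c (τ j) := by
  have hE : ∀ i, A1 0 i ∈ goalBody → JR F 0 [ν i] := fun i h => hb _ h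
  have hS : ∀ i j, A2 2 i j ∈ goalBody → JR F 2 [ν i, ν j] := fun i j h => hb _ h
  have hT : ∀ i j, A2 3 i j ∈ goalBody → JR F 3 [ν i, ν j] := fun i j h => hb _ h
  have hH : JR F 5 [ν 1] := hb (A1 5 1) (by decide)
  have hDc := J_DH (Or.inr rfl) hH
  obtain ⟨n0, n2, n3, h0, h2, h3⟩ := J_ST (hE 0 (by decide)) (hE 2 (by decide)) (hE 3 (by decide))
    (hS 0 2 (by decide)) (hT 0 3 (by decide))
  have key : ∀ j, j < 4 → ∃ n, ν j = .c n := by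
    intro j hj
    interval_cases j
    · exact ⟨_, h0⟩
    · exact hDc _ (by simp)
    · exact ⟨_, h2⟩
    · exact ⟨_, h3⟩
  refine trig_of_const (R := goalR) hF ν hb (by decide) ?_
  have : ∀ a ∈ goalR.body, ∀ t ∈ a.args, ∃ j < 4, t = FTerm.var j := by decide
  intro a ha t ht
  obtain ⟨j, hj, rfl⟩ := this a ha t ht
  exact ⟨j, rfl, by omega, key j hj⟩

theorem rule_triv {I : Interp} {R : ERule} (h : ∀ a ∈ R.head, a ∈ R.body) : R.sat I :=
  fun ν hb => ⟨ν, fun _ _ => rfl, fun a ha => hb a (h a ha)⟩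

theorem eval_ev {F : List FAtom} (τ : ℕ → ℕ) (t : FTerm) :
    FTerm.eval (J F) (fun j => ev τ (.var j)) t = ev τ t := by
  cases t <;> rfl

theorem J_rules {F : List FAtom} (hF : isFactBase F) : ∀ r ∈ RS, r.sat (J F) := by
  intro r hr
  simp only [RS, List.mem_cons, List.not_mem_nil, or_false] at hr
  rcases hr with rfl | rfl | rfl | rfl | rfl
  · intro ν hb
    obtain ⟨τ, h1, h2⟩ := J_rho hF ν hb
    refine ⟨fun j => ev τ (.var j), ?_, ?_⟩
    · intro v hv
      have h3 : v < 11 := by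
        obtain ⟨a, ha, hv'⟩ := hv
        have : ∀ a ∈ rho.body, ∀ t ∈ a.args, ∃ j < 11, t = FTerm.var j := by decide
        obtain ⟨j, hj, h⟩ := this a ha _ hv'
        cases h
        exact hj
      rw [h2 v hv]
      simp [ev, h3]
    · intro a ha
      right; left
      exact ⟨τ, h1, a, ha, rfl, List.map_congr_left (fun t _ => eval_ev τ t)⟩
  · intro ν hb
    obtain ⟨τ, h1, h2⟩ := J_goal hF ν hb
    refine ⟨ν, fun _ _ => rfl, ?_⟩
    intro a ha
    right; right
    refine ⟨τ, h1, a, ha, rfl, ?_⟩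
    simp [goalR] at ha
    subst ha
    rfl
  · exact rule_triv (by decide)
  · exact rule_triv (by decide)
  · exact rule_triv (by decide)

/-- Universality of `J`. -/
theorem J_hom {F : List FAtom} (M : Interp) (hM : satFacts M F)
    (hR : ∀ r ∈ RS, r.sat M) :
    ∃ g : Val → M.Dom, (∀ n, g (.c n) = M.cst n) ∧
      ∀ p l, isFactBase F → JR F p l → M.rel p (l.map g) := by
  classical
  have hbody : ∀ (R : ERule) τ, (∀ b ∈ R.body, ∀ t ∈ b.args, ∃ j, t = FTerm.var j) →
      trig R F τ → ∀ a ∈ R.body, a.sat M (fun j => M.cst (τ j)) := by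
    intro R τ hv ht a ha
    have := hM (fun _ => M.cst 0) _ (ht.2 a ha)
    simp only [FAtom.sat, FAtom.subst, List.map_map] at this ⊢
    convert this using 1
    apply List.map_congr_left
    intro t ht
    obtain ⟨j, rfl⟩ := hv a ha t ht
    rfl
  have hrv : ∀ b ∈ rho.body, ∀ t ∈ b.args, ∃ j, t = FTerm.var j := by
    have : ∀ a ∈ rho.body, ∀ t ∈ a.args, ∃ j < 11, t = FTerm.var j := by decide
    intro b hb t ht
    obtain ⟨j, -, h⟩ := this b hb t ht
    exact ⟨j, h⟩
  have hgv : ∀ b ∈ goalR.body, ∀ t ∈ b.args, ∃ j, t = FTerm.var j := by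
    have : ∀ a ∈ goalR.body, ∀ t ∈ a.args, ∃ j < 11, t = FTerm.var j := by decide
    intro b hb t ht
    obtain ⟨j, -, h⟩ := this b hb t ht
    exact ⟨j, h⟩
  have hν : ∀ τ, ∃ ν : ℕ → M.Dom, trig rho F τ →
      (∀ j, j < 11 → ν j = M.cst (τ j)) ∧ ∀ a ∈ rho.head, a.sat M ν := by
    intro τ
    by_cases ht : trig rho F τ
    · obtain ⟨ν', h1, h2⟩ := hR rho (by simp [RS]) _ (hbody rho τ hrv ht)
      refine ⟨ν', fun _ => ⟨?_, h2⟩⟩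
      intro j hj
      apply h1
      have : ∀ j < 11, ∃ a ∈ rho.body, FTerm.var j ∈ a.args := by decide
      exact this j hj
    · exact ⟨fun _ => M.cst 0, fun h => absurd h ht⟩
  choose ν hν using hν
  let g : Val → M.Dom := fun v => match v with
    | .c n => M.cst n
    | .nl τ j => ν τ j
  refine ⟨g, fun _ => rfl, ?_⟩
  intro p l hF h
  rcases h with ⟨a, ha, rfl, rfl⟩ | ⟨τ, ht, a, ha, rfl, rfl⟩ | ⟨τ, ht, a, ha, rfl, rfl⟩
  · have := hM (fun _ => M.cst 0) a ha
    simp only [FAtom.sat, List.map_map] at this ⊢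
    convert this using 1
    apply List.map_congr_left
    intro t ht
    obtain ⟨c, rfl⟩ := hF a ha t ht
    rfl
  · have := (hν τ ht).2 a ha
    simp only [FAtom.sat, List.map_map] at this ⊢
    convert this using 1
    apply List.map_congr_left
    intro t ht'
    have h4 : ∀ a ∈ rho.head, ∀ t ∈ a.args, ∃ j < 20, t = FTerm.var j := by decide
    obtain ⟨j, -, rfl⟩ := h4 a ha t ht'
    by_cases hj : j < 11
    · simp [ev, hj, FTerm.eval, g, (hν τ ht).1 j hj]
    · simp [ev, hj, FTerm.eval, g]
  · obtain ⟨ν', -, h2⟩ := hR goalR (by simp [RS]) _ (hbody goalR τ hgv ht)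
    have := h2 a ha
    simp [goalR] at ha
    subst ha
    simpa [FAtom.sat, aG] using this

theorem sat_hom {I M : Interp} (g : I.Dom → M.Dom) (hc : ∀ n, g (I.cst n) = M.cst n)
    (hg : ∀ p l, I.rel p l → M.rel p (l.map g)) {Q : List FAtom} (h : satCQ I Q) :
    satCQ M Q := by
  obtain ⟨ν, hν⟩ := h
  refine ⟨fun j => g (ν j), fun a ha => ?_⟩
  have := hg _ _ (hν a ha)
  simp only [FAtom.sat, List.map_map] at this ⊢
  convert this using 1
  apply List.map_congr_left
  intro t _
  cases t <;> simp [FTerm.eval, hc]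

theorem J_univ {F : List FAtom} (hF : isFactBase F) (Q : List FAtom) :
    satCQ (J F) Q ↔ entails F RS Q := by
  constructor
  · intro h M hM hR
    obtain ⟨g, hg1, hg2⟩ := J_hom M hM hR
    exact sat_hom (I := J F) g hg1 (fun p l => hg2 p l hF) h
  · intro h
    exact h (J F) (J_facts hF) (J_rules hF)



/-! ## `RS` is a finite expansion set -/

def CF (F : List FAtom) : Set ℕ := atomsConsts F

theorem CF_finite (F : List FAtom) : (CF F).Finite := by
  have h : (CF F) ⊆ ⋃ a ∈ {a | a ∈ F}, ⋃ t ∈ {t | t ∈ a.args}, {c | t = FTerm.const c} := by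
    rintro c ⟨a, ha, hc⟩
    simp only [Set.mem_iUnion, Set.mem_ofPred_eq]
    exact ⟨a, ha, _, hc, rfl⟩
  refine Set.Finite.subset ?_ h
  refine Set.Finite.biUnion (List.finite_toSet F) fun a _ => ?_
  refine Set.Finite.biUnion (List.finite_toSet a.args) fun t _ => ?_
  apply Set.Subsingleton.finite
  rintro x hx y hy
  simp at hx hy
  rw [hx] at hy
  injection hy

def supp (F : List FAtom) : Set Val :=
  {v | (∃ n ∈ CF F, v = .c n) ∨ ∃ τ j, v = .nl τ j ∧ j < 20 ∧ (∀ i, 11 ≤ i → τ i = 0) ∧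
    ∀ i, i < 11 → τ i ∈ CF F}

theorem supp_finite (F : List FAtom) : (supp F).Finite := by
  have h1 : {v | ∃ n ∈ CF F, v = Val.c n}.Finite := by
    have : {v | ∃ n ∈ CF F, v = Val.c n} = Val.c '' CF F := by
      ext v; constructor
      · rintro ⟨n, hn, rfl⟩; exact ⟨n, hn, rfl⟩
      · rintro ⟨n, hn, rfl⟩; exact ⟨n, hn, rfl⟩
    rw [this]
    exact (CF_finite F).image _
  have : Finite (CF F) := CF_finite F
  have h2 : (Set.range (fun p : (Fin 11 → CF F) × Fin 20 =>
      Val.nl (fun i => if h : i < 11 then (p.1 ⟨i, h⟩ : ℕ) else 0) p.2)).Finite :=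
    Set.finite_range _
  refine (h1.union h2).subset ?_
  rintro v (h | ⟨τ, j, rfl, hj, h0, hc⟩)
  · left; exact h
  · right
    refine ⟨⟨fun i => ⟨τ i, hc i i.2⟩, ⟨j, hj⟩⟩, ?_⟩
    simp
    funext i
    by_cases hi : i < 11
    · simp [hi]
    · simp [hi, h0 i (by omega)]

theorem trig_CF {F : List FAtom} {τ : ℕ → ℕ} (h : trig rho F τ) (i : ℕ) (hi : i < 11) :
    τ i ∈ CF F := by
  have : ∀ j < 11, ∃ a ∈ rho.body, FTerm.var j ∈ a.args := by decide
  obtain ⟨a, ha, hi'⟩ := this i hi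
  refine ⟨_, h.2 a ha, ?_⟩
  simp only [FAtom.subst, List.mem_map]
  exact ⟨_, hi', rfl⟩

theorem JR_supp {F : List FAtom} (hF : isFactBase F) {p : ℕ} {l : List Val} (h : JR F p l) :
    ∀ v ∈ l, v ∈ supp F := by
  rcases h with ⟨a, ha, rfl, rfl⟩ | ⟨τ, ht, a, ha, rfl, rfl⟩ | ⟨τ, ht, a, ha, rfl, rfl⟩
  · intro v hv
    simp only [List.mem_map] at hv
    obtain ⟨t, ht, rfl⟩ := hv
    obtain ⟨c, rfl⟩ := hF a ha t ht
    left
    exact ⟨c, ⟨a, ha, ht⟩, rfl⟩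
  · intro v hv
    simp only [List.mem_map] at hv
    obtain ⟨t, ht', rfl⟩ := hv
    have h4 : ∀ a ∈ rho.head, ∀ t ∈ a.args, ∃ j < 20, t = FTerm.var j := by decide
    obtain ⟨j, hj, rfl⟩ := h4 a ha t ht'
    by_cases hj' : j < 11
    · left; exact ⟨τ j, trig_CF ht j hj', by simp [ev, hj']⟩
    · right; exact ⟨τ, j, by simp [ev, hj'], hj, ht.1, trig_CF ht⟩
  · simp [goalR] at ha
    subst ha
    simp [aG]

def JFR (F : List FAtom) (p : ℕ) (l : List (Option (supp F))) : Prop :=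
  ∃ l0 : List (supp F), l = l0.map some ∧ JR F p (l0.map Subtype.val)

open Classical in
noncomputable abbrev JF (F : List FAtom) : Interp where
  Dom := Option (supp F)
  inh := ⟨none⟩
  rel := JFR F
  cst n := if h : Val.c n ∈ supp F then some ⟨_, h⟩ else none

open Classical in
noncomputable def toF (F : List FAtom) (v : Val) : Option (supp F) :=
  if h : v ∈ supp F then some ⟨_, h⟩ else none

def backF (F : List FAtom) : Option (supp F) → Val
  | some v => v.1
  | none => .c 0

theorem toF_rel {F : List FAtom} (hF : isFactBase F) (p : ℕ) (l : List Val) (h : JR F p l) :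
    JFR F p (l.map (toF F)) := by
  have hs := JR_supp hF h
  have h0 : ∃ l0 : List (supp F), l = l0.map Subtype.val := by
    clear h
    induction l with
    | nil => exact ⟨[], rfl⟩
    | cons v l ih =>
      obtain ⟨l0, hl0⟩ := ih (fun v hv => hs v (by simp [hv]))
      exact ⟨⟨v, hs v (by simp)⟩ :: l0, by simp [hl0]⟩
  obtain ⟨l0, rfl⟩ := h0
  refine ⟨l0, ?_, h⟩
  rw [List.map_map]
  apply List.map_congr_left
  intro v _
  simp [toF]

theorem JF_back {F : List FAtom} {ν : ℕ → Option (supp F)} {a : FAtom} (h : a.sat (JF F) ν) :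
    a.sat (J F) (fun j => backF F (ν j)) ∧ ∀ j, FTerm.var j ∈ a.args → ν j ≠ none := by
  obtain ⟨l0, h1, h2⟩ := h
  have hs : ∀ t ∈ a.args, FTerm.eval (JF F) ν t ≠ none := by
    intro t ht h
    have : FTerm.eval (JF F) ν t ∈ a.args.map (FTerm.eval (JF F) ν) := List.mem_map_of_mem ht
    rw [h1, h] at this
    simp at this
  refine ⟨?_, fun j hj => hs _ hj⟩
  have h3 : l0.map Subtype.val = (l0.map some).map (backF F) := by
    rw [List.map_map]; rfl
  rw [h3, ← h1, List.map_map] at h2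
  simp only [FAtom.sat]
  convert h2 using 1
  apply List.map_congr_left
  intro t ht
  cases t with
  | var j => rfl
  | const n =>
    have := hs _ ht
    simp only [FTerm.eval, Function.comp] at this ⊢
    split_ifs at this ⊢ with h
    · rfl
    · simp at this

theorem RS_FES : isFES RS := by
  intro F hF
  have hto : ∀ n, toF F ((J F).cst n) = (JF F).cst n := fun n => rfl
  have hcq : ∀ Q, satCQ (JF F) Q ↔ satCQ (J F) Q := by
    intro Q
    constructor
    · rintro ⟨ν, hν⟩
      exact ⟨_, fun a ha => (JF_back (hν a ha)).1⟩
    · exact sat_hom (I := J F) (M := JF F) (toF F) hto (toF_rel hF)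
  refine ⟨JF F, ?_, ?_, ?_, ?_⟩
  · have : Finite (supp F) := supp_finite F
    exact (inferInstance : Finite (Option (supp F)))
  · intro ν a ha
    have := toF_rel hF _ _ (J_facts hF (fun _ => Val.c 0) a ha)
    simp only [FAtom.sat]
    convert this using 1
    rw [List.map_map]
    apply List.map_congr_left
    intro t ht
    obtain ⟨c, rfl⟩ := hF a ha t ht
    rfl
  · intro r hr ν hb
    obtain ⟨ν', h1, h2⟩ := J_rules hF r hr _ (fun a ha => (JF_back (hb a ha)).1)
    refine ⟨fun j => toF F (ν' j), ?_, ?_⟩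
    · intro v hv
      show toF F (ν' v) = ν v
      rw [h1 v hv]
      obtain ⟨a, ha, hv'⟩ := hv
      have := (JF_back (hb a ha)).2 v hv'
      obtain ⟨w, hw⟩ := Option.ne_none_iff_exists'.1 this
      rw [hw]
      simp [backF, toF]
    · intro a ha
      have := toF_rel hF _ _ (h2 a ha)
      simp only [FAtom.sat]
      convert this using 1
      rw [List.map_map]
      apply List.map_congr_left
      intro t ht
      cases t <;> rfl
  · intro Q
    rw [hcq, J_univ hF]


/-! ## Rewriting steps -/

def Reach (Q : List FAtom) (K : Set FAtom) : Prop :=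
  ∃ Q', isRewriting RS Q Q' ∧ ∀ x, x ∈ Q' ↔ x ∈ K

theorem Reach.stepL {Q : List FAtom} {K : Set FAtom} (h : Reach Q K) {R : ERule} (hR : R ∈ RS)
    {p a : FAtom} (hp : p ∈ K) (ha : a ∈ R.head) (σ : ℕ → FTerm) (hu : p.subst σ = a.subst σ)
    (hex : ∀ z ∈ R.exV, ∀ t, t ∈ p.args ∨ t ∈ a.args → t.subst σ = σ z → t = .var z)
    (L : List FAtom)
    (hL : ∀ x, x ∈ L ↔ (∃ b ∈ K, b ≠ p ∧ x = b.subst σ) ∨ ∃ b ∈ R.body, x = b.subst σ) :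
    isRewriting RS Q L := by
  obtain ⟨Q', h1, h2⟩ := h
  have hμ : ∃ μ : PieceUnifier Q' R, μ.piece = [p] ∧ μ.σ = σ := by
    refine ⟨⟨[p], [a], σ, by simp, ?_, ?_, ?_, ?_⟩, rfl, rfl⟩
    · intro b hb
      simp at hb
      subst hb
      exact (h2 _).2 hp
    · intro b hb
      simp at hb
      subst hb
      exact ha
    · ext x
      simp [hu]
    · intro z hz t ht h3 h4
      exfalso
      apply h4
      apply hex z hz t _ h3
      obtain ⟨b, hb, htb⟩ := ht
      simp at hb
      rcases hb with rfl | rfl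
      · left; exact htb
      · right; exact htb
  obtain ⟨μ, hμ1, hμ2⟩ := hμ
  refine Relation.ReflTransGen.tail h1 ⟨R, hR, μ, ?_⟩
  ext x
  simp only [hμ1, hμ2, Set.mem_ofPred_eq, Set.mem_union, hL, List.mem_filter, h2,
    List.mem_singleton, decide_eq_true_eq, and_assoc]

theorem Reach.step {Q : List FAtom} {K : Set FAtom} (h : Reach Q K) {R : ERule} (hR : R ∈ RS)
    {p a : FAtom} (hp : p ∈ K) (ha : a ∈ R.head) (σ : ℕ → FTerm) (hu : p.subst σ = a.subst σ)
    (hex : ∀ z ∈ R.exV, ∀ t, t ∈ p.args ∨ t ∈ a.args → t.subst σ = σ z → t = .var z)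
    (K' : Set FAtom)
    (hK' : ∀ x, x ∈ K' ↔ (∃ b ∈ K, b ≠ p ∧ x = b.subst σ) ∨ ∃ b ∈ R.body, x = b.subst σ) :
    Reach Q K' := by
  obtain ⟨Q', h1, h2⟩ := id h
  have hL : ∀ x, x ∈ (Q'.filter (fun b => decide (b ≠ p))).map (FAtom.subst σ) ++
      R.body.map (FAtom.subst σ) ↔
      (∃ b ∈ K, b ≠ p ∧ x = b.subst σ) ∨ ∃ b ∈ R.body, x = b.subst σ := by
    intro x
    simp only [List.mem_append, List.mem_map, List.mem_filter, h2,
      decide_eq_true_eq, and_assoc, @eq_comm _ x]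
  exact ⟨_, h.stepL hR hp ha σ hu hex _ hL, fun x => by rw [hL, hK']⟩

theorem subst_id {σ : ℕ → FTerm} {a : FAtom} (h : ∀ j, .var j ∈ a.args → σ j = .var j) :
    a.subst σ = a := by
  cases a with
  | mk p as =>
    simp only [FAtom.subst, FAtom.mk.injEq, true_and]
    conv_rhs => rw [← List.map_id as]
    apply List.map_congr_left
    intro t ht
    cases t with
    | var j => exact h j ht
    | const n => rfl

theorem subst_congr {σ σ' : ℕ → FTerm} {a : FAtom} (h : ∀ j, .var j ∈ a.args → σ j = σ' j) :
    a.subst σ = a.subst σ' := by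
  simp only [FAtom.subst, FAtom.mk.injEq, true_and]
  apply List.map_congr_left
  intro t ht
  cases t with
  | var j => exact h j ht
  | const n => rfl

theorem subst_subst (σ σ' : ℕ → FTerm) (a : FAtom) :
    (a.subst σ).subst σ' = a.subst (fun j => (σ j).subst σ') := by
  simp only [FAtom.subst, FAtom.mk.injEq, true_and, List.map_map]
  apply List.map_congr_left
  intro t _
  cases t <;> rfl

/-- All variables are large. -/
def Big (K : Set FAtom) : Prop := ∀ b ∈ K, ∀ j, FTerm.var j ∈ b.args → 20 ≤ j

theorem Reach.specL {Q : List FAtom} {K : Set FAtom} (h : Reach Q K) (hB : Big K)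
    {t : FTerm} (ht : (⟨0, [t]⟩ : FAtom) ∈ K) (σ : ℕ → FTerm)
    (L : List FAtom) (hL : ∀ x, x ∈ L ↔ ∃ b ∈ K, x = b.subst σ) :
    isRewriting RS Q L := by
  let σ' : ℕ → FTerm := fun j => if j = 0 then t.subst σ else σ j
  have hσ : ∀ b ∈ K, b.subst σ' = b.subst σ := by
    intro b hb
    apply subst_congr
    intro j hj
    have := hB b hb j hj
    simp [σ', show j ≠ 0 by omega]
  have hE : (⟨0, [t]⟩ : FAtom).subst σ = (A1 0 0).subst σ' := by
    simp [FAtom.subst, FTerm.subst, σ']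
  refine h.stepL (R := tautE) (by simp [RS]) ht (a := A1 0 0) (by simp [tautE]) σ' ?_ ?_ _ ?_
  · rw [hσ _ ht]; exact hE
  · rintro z ⟨⟨a, ha, hz⟩, hz2⟩
    exact absurd ⟨a, ha, hz⟩ hz2
  · intro x
    rw [hL]
    constructor
    · rintro ⟨b, hb, rfl⟩
      by_cases hbp : b = ⟨0, [t]⟩
      · right
        exact ⟨A1 0 0, by simp [tautE], by rw [hbp, hE]⟩
      · left
        exact ⟨b, hb, hbp, (hσ b hb).symm⟩
    · rintro (⟨b, hb, -, rfl⟩ | ⟨b, hb, rfl⟩)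
      · exact ⟨b, hb, hσ b hb⟩
      · simp [tautE] at hb
        subst hb
        exact ⟨_, ht, hE.symm⟩

theorem Reach.spec {Q : List FAtom} {K : Set FAtom} (h : Reach Q K) (hB : Big K)
    {t : FTerm} (ht : (⟨0, [t]⟩ : FAtom) ∈ K) (σ : ℕ → FTerm) :
    Reach Q {x | ∃ b ∈ K, x = b.subst σ} := by
  obtain ⟨Q', h1, h2⟩ := id h
  have hL : ∀ x, x ∈ Q'.map (FAtom.subst σ) ↔ ∃ b ∈ K, x = b.subst σ := by
    intro x
    simp only [List.mem_map, h2, @eq_comm _ x]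
  exact ⟨_, h.specL hB ht σ _ hL, hL⟩

open Classical in
theorem Reach.remove {Q : List FAtom} {K : Set FAtom} (h : Reach Q K) (hB : Big K)
    {t : FTerm} (ht : (⟨0, [t]⟩ : FAtom) ∈ K) {R : ERule} (hR : R ∈ RS)
    (hbig : ∀ x ∈ atomsVars R.body, x < 20)
    {p a : FAtom} (hp : p ∈ K) (ha : a ∈ R.head) (e : Equiv.Perm ℕ)
    (he : ∀ x ∈ atomsVars R.body, e x = x) (κ : ℕ → FTerm)
    (hu : a.subst (fun x => if x ∈ atomsVars R.body then κ x else .var (e.symm x)) = p)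
    (hκ : ∀ j ∈ atomsVars R.body, .var j ∈ a.args → ∀ z ∈ R.exV, κ j ≠ .var (e.symm z))
    (K' : Set FAtom)
    (hK' : ∀ x, x ∈ K' ↔ (x ∈ K ∧ x ≠ p) ∨ ∃ b ∈ R.body, x = b.subst κ) :
    Reach Q K' := by
  set σ2 : ℕ → FTerm := fun x => if x ∈ atomsVars R.body then κ x else .var (e.symm x) with hσ2
  have h1 := h.spec hB ht (fun j => .var (e j))
  have hnb : ∀ j, 20 ≤ j → e j ∉ atomsVars R.body := by
    intro j hj hb
    have h1 := he _ hb
    have h2 := e.injective h1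
    rw [h2] at hb
    have := hbig _ hb
    omega
  have hinv : ∀ b ∈ K, (b.subst (fun j => .var (e j))).subst σ2 = b := by
    intro b hb
    rw [subst_subst]
    apply subst_id
    intro j hj
    have := hnb j (hB b hb j hj)
    simp [FTerm.subst, σ2, this]
  refine h1.step hR (p := p.subst (fun j => .var (e j))) ⟨p, hp, rfl⟩ ha σ2 ?_ ?_ _ ?_
  · rw [hinv p hp, hu]
  · intro z hz s hs heq
    have hz2 : σ2 z = .var (e.symm z) := by simp [σ2, hz.2]
    rw [hz2] at heq
    rcases hs with hs | hs
    · simp only [FAtom.subst, List.mem_map] at hs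
      obtain ⟨s', hs', rfl⟩ := hs
      cases s' with
      | const n => simp [FTerm.subst] at heq
      | var j =>
        have := hnb j (hB p hp j hs')
        simp [FTerm.subst, σ2, this] at heq ⊢
        simp [heq]
    · cases s with
      | const n => simp [FTerm.subst] at heq
      | var j =>
        by_cases hj : j ∈ atomsVars R.body
        · simp [FTerm.subst, σ2, hj] at heq
          exact absurd heq (hκ j hj hs z hz)
        · simp [FTerm.subst, σ2, hj] at heq
          simp [heq]
  · intro x
    rw [hK']
    have hb2 : ∀ b ∈ R.body, b.subst σ2 = b.subst κ := by
      intro b hb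
      apply subst_congr
      intro j hj
      have : j ∈ atomsVars R.body := ⟨b, hb, hj⟩
      simp [σ2, this]
    constructor
    · rintro (⟨hx, hxp⟩ | ⟨b, hb, rfl⟩)
      · left
        refine ⟨_, ⟨x, hx, rfl⟩, ?_, (hinv x hx).symm⟩
        intro heq
        apply hxp
        rw [← hinv x hx, heq, hinv p hp]
      · right
        exact ⟨b, hb, (hb2 b hb).symm⟩
    · rintro (⟨_, ⟨b, hb, rfl⟩, hbp, rfl⟩ | ⟨b, hb, rfl⟩)
      · left
        rw [hinv b hb]
        exact ⟨hb, fun h => hbp (by rw [h])⟩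
      · right
        exact ⟨b, hb, hb2 b hb⟩

theorem rho_vars (x : ℕ) : x ∈ atomsVars rho.body ↔ x < 11 := by
  constructor
  · rintro ⟨a, ha, hx⟩
    have : ∀ a ∈ rho.body, ∀ t ∈ a.args, ∃ j < 11, t = FTerm.var j := by decide
    obtain ⟨j, hj, h⟩ := this a ha _ hx
    cases h
    exact hj
  · intro hx
    have : ∀ j < 11, ∃ a ∈ rho.body, FTerm.var j ∈ a.args := by decide
    exact this x hx

theorem rho_head_vars {a : FAtom} (ha : a ∈ rho.head) {t : FTerm} (ht : t ∈ a.args) :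
    ∃ j < 20, t = .var j := by
  have : ∀ a ∈ rho.head, ∀ t ∈ a.args, ∃ j < 20, t = FTerm.var j := by decide
  exact this a ha t ht

theorem goal_vars (x : ℕ) (h : x ∈ atomsVars goalR.body) : x < 11 := by
  obtain ⟨a, ha, hx⟩ := h
  have : ∀ a ∈ goalR.body, ∀ t ∈ a.args, ∃ j < 11, t = FTerm.var j := by decide
  obtain ⟨j, hj, h⟩ := this a ha _ hx
  cases h
  exact hj

theorem Reach.add {Q : List FAtom} {K : Set FAtom} (h : Reach Q K) (hB : Big K)
    {t : FTerm} (ht : (⟨0, [t]⟩ : FAtom) ∈ K) (κ : ℕ → FTerm) (K' : Set FAtom)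
    (hK' : ∀ x, x ∈ K' ↔ x ∈ K ∨ ∃ b ∈ rhoBody, x = b.subst κ) : Reach Q K' := by
  have h19 : 19 ∈ atomsVars addE.body := ⟨A1 0 19, by simp [addE], by simp⟩
  have hk : ∀ b ∈ rhoBody, b.subst (fun j => if j = 19 then t else κ j) = b.subst κ := by
    intro b hb
    apply subst_congr
    intro j hj
    have : j < 11 := (rho_vars j).1 ⟨b, hb, hj⟩
    simp [show j ≠ 19 by omega]
  have hE : (A1 0 19).subst (fun j => if j = 19 then t else κ j) = ⟨0, [t]⟩ := by
    simp [FAtom.subst, FTerm.subst]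
  refine h.remove hB ht (R := addE) (by simp [RS]) ?_ ht (a := A1 0 19) (by simp [addE]) 1
    (fun _ _ => rfl) (fun j => if j = 19 then t else κ j) ?_ ?_ _ ?_
  · rintro x ⟨a, ha, hx⟩
    simp only [addE, List.mem_cons] at ha
    rcases ha with rfl | ha
    · simp at hx
      omega
    · have : x < 11 := (rho_vars x).1 ⟨a, ha, hx⟩
      omega
  · simp [FAtom.subst, FTerm.subst, h19]
  · rintro j - - z ⟨⟨a, ha, hz⟩, hz2⟩
    simp [addE] at ha
    subst ha
    simp at hz
    subst hz
    exact absurd h19 hz2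
  · intro x
    rw [hK']
    simp only [addE, List.mem_cons]
    constructor
    · rintro (hx | ⟨b, hb, rfl⟩)
      · by_cases hx2 : x = ⟨0, [t]⟩
        · right; exact ⟨_, Or.inl rfl, by rw [hE, hx2]⟩
        · left; exact ⟨hx, hx2⟩
      · right; exact ⟨b, Or.inr hb, (hk b hb).symm⟩
    · rintro (⟨hx, -⟩ | ⟨b, rfl | hb, rfl⟩)
      · left; exact hx
      · left; rw [hE]; exact ht
      · right; exact ⟨b, hb, hk b hb⟩

theorem Reach.remG {Q : List FAtom} {K : Set FAtom} (h : Reach Q K) (hB : Big K)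
    (hG : aG ∈ K) (κ : ℕ → FTerm) (K' : Set FAtom)
    (hK' : ∀ x, x ∈ K' ↔ (x ∈ K ∧ x ≠ aG) ∨ ∃ b ∈ goalBody, x = b.subst κ) : Reach Q K' := by
  have h1 : ∀ b ∈ K, b.subst (fun j => if j < 20 then κ j else .var j) = b := by
    intro b hb
    apply subst_id
    intro j hj
    have := hB b hb j hj
    simp [show ¬ j < 20 by omega]
  have h2 : ∀ b ∈ goalBody, b.subst (fun j => if j < 20 then κ j else .var j) = b.subst κ := by
    intro b hb
    apply subst_congr
    intro j hj
    have := goal_vars j ⟨b, hb, hj⟩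
    simp [show j < 20 by omega]
  refine h.step (R := goalR) (by simp [RS]) hG (a := aG) (by simp [goalR])
    (fun j => if j < 20 then κ j else .var j) rfl ?_ _ ?_
  · rintro z - t ht
    simp [aG] at ht
  · intro x
    rw [hK']
    constructor
    · rintro (⟨hx, hx2⟩ | ⟨b, hb, rfl⟩)
      · left; exact ⟨x, hx, hx2, (h1 x hx).symm⟩
      · right; exact ⟨b, hb, (h2 b hb).symm⟩
    · rintro (⟨b, hb, hb2, rfl⟩ | ⟨b, hb, rfl⟩)
      · left; rw [h1 b hb]; exact ⟨hb, hb2⟩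
      · right; exact ⟨b, hb, h2 b hb⟩

theorem rho_exV {z : ℕ} (hz : z ∈ rho.exV) : 11 ≤ z ∧ z < 20 := by
  refine ⟨?_, ?_⟩
  · have := hz.2
    rw [rho_vars] at this
    omega
  · obtain ⟨a, ha, h⟩ := hz.1
    obtain ⟨j, hj, h2⟩ := rho_head_vars ha h
    cases h2
    exact hj

/-- Removing an atom by an atom of the head of `rho`. -/
theorem Reach.remR {Q : List FAtom} {K : Set FAtom} (h : Reach Q K) (hB : Big K)
    {t : FTerm} (ht : (⟨0, [t]⟩ : FAtom) ∈ K)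
    {p a : FAtom} (hp : p ∈ K) (ha : a ∈ rho.head) (e : Equiv.Perm ℕ)
    (he : ∀ x < 11, e x = x) (κ : ℕ → FTerm)
    (hu : a.subst (fun x => if x < 11 then κ x else .var (e.symm x)) = p)
    (hκ : ∀ j < 11, .var j ∈ a.args → ∃ n, κ j = .const n)
    (K' : Set FAtom)
    (hK' : ∀ x, x ∈ K' ↔ (x ∈ K ∧ x ≠ p) ∨ ∃ b ∈ rhoBody, x = b.subst κ) :
    Reach Q K' := by
  refine h.remove hB ht (R := rho) (by simp [RS]) ?_ hp ha e ?_ κ ?_ ?_ K' hK'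
  · intro x hx
    rw [rho_vars] at hx
    omega
  · intro x hx
    rw [rho_vars] at hx
    exact he x hx
  · rw [← hu]
    apply subst_congr
    intro j hj
    simp only [rho_vars]
  · intro j hj hja z hz
    rw [rho_vars] at hj
    obtain ⟨n, hn⟩ := hκ j hj hja
    rw [hn]
    simp

theorem rho_head_shape {a : FAtom} (ha : a ∈ rho.head) :
    (∃ i, 11 ≤ i ∧ a = A1 0 i) ∨
    ∃ p i j, (p = 1 ∨ p = 2 ∨ p = 3) ∧ (11 ≤ i ∨ 11 ≤ j) ∧ a = A2 p i j := by
  simp only [rho, rhoHead, List.mem_cons, List.not_mem_nil, or_false] at ha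
  rcases ha with rfl | rfl | rfl | rfl | rfl | rfl | rfl | rfl | rfl | rfl | rfl | rfl | rfl |
      rfl | rfl | rfl | rfl | rfl | rfl | rfl | rfl | rfl | rfl
  iterate 4 exact Or.inl ⟨_, by omega, rfl⟩
  all_goals exact Or.inr ⟨_, _, _, by omega, by omega, rfl⟩

theorem swap_lt {v z x : ℕ} (hv : 20 ≤ v) (hz : 11 ≤ z) (hx : x < 11) :
    Equiv.swap v z x = x :=
  Equiv.swap_apply_of_ne_of_ne (by omega) (by omega)

theorem Reach.remP {Q : List FAtom} {K : Set FAtom} (h : Reach Q K) (hB : Big K)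
    {t : FTerm} (ht : (⟨0, [t]⟩ : FAtom) ∈ K) {p a : FAtom} (s : ℕ → ℕ)
    (hp : p.subst (fun j => .var (s j)) ∈ K) (ha : a ∈ rho.head)
    (val : FTerm → Val) (hval : ∀ n, val (.const n) = .c n) (τ : ℕ → ℕ)
    (hpa : p.pred = a.pred) (hargs : p.args.map val = a.args.map (ev τ))
    (κ : ℕ → FTerm) (hκ : ∀ n, .const n ∈ p.args → ∀ j < 11, τ j = n → κ j = .const n)
    (K' : Set FAtom)
    (hK' : ∀ x, x ∈ K' ↔ (x ∈ K ∧ x ≠ p.subst (fun j => .var (s j))) ∨ ∃ b ∈ rhoBody, x = b.subst κ) :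
    Reach Q K' := by
  obtain ⟨pp, args⟩ := p
  have hbig := hB _ hp
  rcases rho_head_shape ha with ⟨i, hi, rfl⟩ | ⟨q, i, j, hq, hij, rfl⟩
  · simp only [List.map_cons, List.map_nil] at hpa hargs
    subst hpa
    rcases args with _ | ⟨t1, _ | ⟨_, _⟩⟩ <;> simp at hargs
    cases t1 with
    | const n => simp [hval, ev, Nat.not_lt.2 hi] at hargs
    | var v =>
      have hv := hbig (s v) (by simp [FAtom.subst, FTerm.subst])
      refine h.remR hB ht hp ha (Equiv.swap (s v) i) (fun x hx => swap_lt hv hi hx) κ ?_ ?_ K' hK'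
      · simp [FAtom.subst, FTerm.subst, Nat.not_lt.2 hi]
      · intro j hj hj2
        simp at hj2
        omega
  · simp only [List.map_cons, List.map_nil] at hpa hargs
    subst hpa
    rcases args with _ | ⟨t1, _ | ⟨t2, _ | ⟨_, _⟩⟩⟩ <;> simp at hargs
    obtain ⟨h1, h2⟩ := hargs
    cases t1 with
    | const n =>
      rw [hval] at h1
      have hi : i < 11 := by
        by_contra hi
        simp [ev, hi] at h1
      have hj : 11 ≤ j := by omega
      cases t2 with
      | const m => simp [hval, ev, Nat.not_lt.2 hj] at h2
      | var v =>
        have hv := hbig (s v) (by simp [FAtom.subst, FTerm.subst])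
        simp [ev, hi] at h1
        have hk : κ i = .const n := hκ n (by simp) i hi h1.symm
        refine h.remR hB ht hp ha (Equiv.swap (s v) j) (fun x hx => swap_lt hv hj hx) κ ?_ ?_ K' hK'
        · simp [FAtom.subst, FTerm.subst, Nat.not_lt.2 hj, hi, hk]
        · intro x hx hj2
          simp at hj2
          have : x = i := by omega
          subst this
          exact ⟨n, hk⟩
    | var v =>
      have hv := hbig (s v) (by simp [FAtom.subst, FTerm.subst])
      cases t2 with
      | const n =>
        rw [hval] at h2
        have hj : j < 11 := by
          by_contra hj
          simp [ev, hj] at h2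
        have hi : 11 ≤ i := by omega
        simp [ev, hj] at h2
        have hk : κ j = .const n := hκ n (by simp) j hj h2.symm
        refine h.remR hB ht hp ha (Equiv.swap (s v) i) (fun x hx => swap_lt hv hi hx) κ ?_ ?_ K' hK'
        · simp [FAtom.subst, FTerm.subst, Nat.not_lt.2 hi, hj, hk]
        · intro x hx hj2
          simp at hj2
          have : x = j := by omega
          subst this
          exact ⟨n, hk⟩
      | var w =>
        have hw := hbig (s w) (by simp [FAtom.subst, FTerm.subst])
        by_cases hvw : s v = s w
        · have hm : A2 pp 17 17 ∈ rho.head := by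
            rcases hq with rfl | rfl | rfl <;> decide
          refine h.remR hB ht hp hm (Equiv.swap (s v) 17)
            (fun x hx => swap_lt hv (by omega) hx) κ ?_ ?_ K' hK'
          · simp [FAtom.subst, FTerm.subst, hvw]
          · intro x hx hj2
            simp at hj2
            omega
        · have hm : A2 pp 17 18 ∈ rho.head := by
            rcases hq with rfl | rfl | rfl <;> decide
          refine h.remR hB ht hp hm (Equiv.swap (s v) 17 * Equiv.swap (s w) 18)
            (fun x hx => ?_) κ ?_ ?_ K' hK'
          · rw [Equiv.Perm.mul_apply, swap_lt hw (by omega) hx, swap_lt hv (by omega) hx]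
          · have e1 : (Equiv.swap (s v) 17 * Equiv.swap (s w) 18).symm 17 = s v := by
              rw [Equiv.symm_apply_eq, Equiv.Perm.mul_apply,
                Equiv.swap_apply_of_ne_of_ne hvw (by omega), Equiv.swap_apply_left]
            have e2 : (Equiv.swap (s v) 17 * Equiv.swap (s w) 18).symm 18 = s w := by
              rw [Equiv.symm_apply_eq, Equiv.Perm.mul_apply, Equiv.swap_apply_left,
                Equiv.swap_apply_of_ne_of_ne (by omega) (by omega)]
            simp [FAtom.subst, FTerm.subst, e1, e2]
          · intro x hx hj2
            simp at hj2
            omega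


/-! ## Folding -/

theorem eval_map_c {F : List FAtom} (π : ℕ → Val) (f : Val → Val) (hf : ∀ n, f (.c n) = .c n)
    (l : List FTerm) :
    l.map (FTerm.eval (J F) (fun x => f (π x))) = (l.map (FTerm.eval (J F) π)).map f := by
  rw [List.map_map]
  apply List.map_congr_left
  intro t _
  cases t with
  | var j => rfl
  | const n => simp [FTerm.eval, hf]

theorem fold_head {a : FAtom} (ha : a ∈ rho.head) (h0 : a.pred ≠ 0) :
    a.subst (fun x => .var (if x < 11 then x else 10)) ∈ rho.body := by
  have : ∀ a ∈ rho.head, a.pred ≠ 0 →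
      a.subst (fun x => .var (if x < 11 then x else 10)) ∈ rho.body := by decide
  exact this a ha h0

def Labelled (Q : List FAtom) (π : ℕ → Val) (τ : ℕ → ℕ) : Prop :=
  ∃ x j, A1 0 x ∈ Q ∧ π x = .nl τ j

theorem fold {F : List FAtom} {Q : List FAtom} {π : ℕ → Val}
    (h : ∀ a ∈ Q, a.sat (J F) π) :
    ∃ π' : ℕ → Val, (∀ a ∈ Q, a.sat (J F) π') ∧
      ∀ x τ j, π' x = .nl τ j → Labelled Q π' τ := by
  classical
  let fld : Val → Val := fun v => match v with
    | .c n => .c n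
    | .nl τ j => if Labelled Q π τ then .nl τ j else .c (τ 10)
  refine ⟨fun x => fld (π x), ?_, ?_⟩
  · intro a ha
    have h1 := h a ha
    simp only [FAtom.sat] at h1 ⊢
    rw [eval_map_c π fld (fun _ => rfl)]
    rcases h1 with h1 | ⟨τ, ht, a0, ha0, h1, h2⟩ | ⟨τ, ht, a0, ha0, h1, h2⟩
    · left
      have h2 := fRel_c h1
      have : (a.args.map (FTerm.eval (J F) π)).map fld = a.args.map (FTerm.eval (J F) π) := by
        conv_rhs => rw [← List.map_id (a.args.map (FTerm.eval (J F) π))]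
        apply List.map_congr_left
        intro v hv
        obtain ⟨n, rfl⟩ := h2 v hv
        rfl
      rw [this]
      exact h1
    · by_cases hl : Labelled Q π τ
      · right; left
        refine ⟨τ, ht, a0, ha0, h1, ?_⟩
        rw [h2, List.map_map]
        apply List.map_congr_left
        intro t ht'
        obtain ⟨j, hj, rfl⟩ := rho_head_vars ha0 ht'
        by_cases hj' : j < 11 <;> simp [ev, hj', fld, hl]
      · left
        have hp : a0.pred ≠ 0 := by
          intro hp
          rcases rho_head_shape ha0 with ⟨i, hi, rfl⟩ | ⟨q, i, j, hq, hij, rfl⟩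
          · obtain ⟨p, args⟩ := a
            simp only at h1
            subst h1
            rcases args with _ | ⟨t1, _ | ⟨_, _⟩⟩ <;> simp [ev, Nat.not_lt.2 hi] at h2
            cases t1 with
            | const n => simp [FTerm.eval] at h2
            | var v => exact hl ⟨v, i, ha, h2⟩
          · simp only at hp
            omega
        refine ⟨_, ht.2 _ (fold_head ha0 hp), h1, ?_⟩
        rw [h2]
        simp only [FAtom.subst, List.map_map]
        apply List.map_congr_left
        intro t ht'
        obtain ⟨j, hj, rfl⟩ := rho_head_vars ha0 ht'
        by_cases hj' : j < 11 <;> simp [ev, hj', fld, hl, FTerm.subst, gs, gv]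
    · right; right
      refine ⟨τ, ht, a0, ha0, h1, ?_⟩
      simp [goalR] at ha0
      subst ha0
      rw [h2]
      simp [aG]
  · intro x τ j hx
    have : ∀ v, fld v = .nl τ j → v = .nl τ j ∧ Labelled Q π τ := by
      intro v hv
      cases v with
      | c n => simp [fld] at hv
      | nl τ' j' =>
        simp only [fld] at hv
        split_ifs at hv with hl
        rw [hv]
        simp at hv
        rw [← hv.1]
        exact ⟨rfl, hl⟩
    obtain ⟨h1, h2⟩ := this _ hx
    obtain ⟨x0, j0, h3, h4⟩ := id h2
    refine ⟨x0, j0, h3, ?_⟩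
    simp [h4, fld, h2]

/-! ## Iterated rewriting steps -/

theorem Reach.addL {Q : List FAtom} (Ts : List (ℕ → FTerm))
    (hT : ∀ κ ∈ Ts, ∀ j i, κ j = .var i → 20 ≤ i) :
    ∀ {K : Set FAtom}, Reach Q K → Big K → ∀ {t : FTerm}, (⟨0, [t]⟩ : FAtom) ∈ K →
    Reach Q {x | x ∈ K ∨ ∃ κ ∈ Ts, ∃ b ∈ rhoBody, x = b.subst κ} := by
  induction Ts with
  | nil =>
    intro K h _ t _
    simpa using h
  | cons κ Ts ih =>
    intro K h hB t ht
    have h1 := h.add hB ht κ {x | x ∈ K ∨ ∃ b ∈ rhoBody, x = b.subst κ} (fun x => Iff.rfl)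
    have h2 := ih (fun κ' h' => hT κ' (by simp [h'])) h1 ?_ (t := t) (Or.inl ht)
    · convert h2 using 1
      ext x
      simp only [Set.mem_ofPred_eq, List.mem_cons, exists_eq_or_imp, or_assoc]
    · rintro b (hb | ⟨b', hb', rfl⟩) j hj
      · exact hB b hb j hj
      · simp only [FAtom.subst, List.mem_map] at hj
        obtain ⟨s, hs, hj⟩ := hj
        obtain ⟨i, hi, rfl⟩ : ∃ i < 11, s = FTerm.var i := by
          have : ∀ a ∈ rho.body, ∀ t ∈ a.args, ∃ j < 11, t = FTerm.var j := by decide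
          exact this b' hb' s hs
        exact hT κ (by simp) i j hj

def Remv (B : Set FAtom) (q : FAtom) : Prop :=
  ∃ (p a : FAtom) (s : ℕ → ℕ), q = p.subst (fun j => .var (s j)) ∧ a ∈ rho.head ∧
    ∃ (val : FTerm → Val) (τ : ℕ → ℕ) (κ : ℕ → FTerm), (∀ n, val (.const n) = .c n) ∧
      p.pred = a.pred ∧ p.args.map val = a.args.map (ev τ) ∧
      (∀ n, .const n ∈ p.args → ∀ j < 11, τ j = n → κ j = .const n) ∧
      ∀ b ∈ rhoBody, b.subst κ ∈ B

theorem Reach.remL {Q : List FAtom} {B : Set FAtom} {t : FTerm} (ht : (⟨0, [t]⟩ : FAtom) ∈ B)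
    (Ps : List FAtom) (hP : ∀ p ∈ Ps, p ∉ B ∧ Remv B p) :
    ∀ {K : Set FAtom}, Reach Q K → Big K → B ⊆ K → Reach Q {x | x ∈ K ∧ x ∉ Ps} := by
  induction Ps with
  | nil =>
    intro K h _ _
    simpa using h
  | cons q Ps ih =>
    intro K h hB hBK
    obtain ⟨hq, p, a, s, rfl, ha, val, τ, κ, h1, h2, h3, h4, h5⟩ := hP q (by simp)
    have key : ∀ K' : Set FAtom,
        (∀ x, x ∈ K' ↔ (x ∈ K ∧ x ≠ p.subst (fun j => .var (s j)))) → Reach Q K' := by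
      intro K' hK'
      by_cases hqK : p.subst (fun j => .var (s j)) ∈ K
      · refine h.remP hB (hBK ht) s hqK ha val h1 τ h2 h3 κ h4 K' ?_
        intro x
        rw [hK']
        constructor
        · intro hx; exact Or.inl hx
        · rintro (hx | ⟨b, hb, rfl⟩)
          · exact hx
          · refine ⟨hBK (h5 b hb), ?_⟩
            intro he
            exact hq (he ▸ h5 b hb)
      · have : K' = K := by
          ext x
          rw [hK']
          constructor
          · exact fun h => h.1
          · intro hx
            exact ⟨hx, fun he => hqK (he ▸ hx)⟩
        rw [this]
        exact h
    have h6 := key {x | x ∈ K ∧ x ≠ p.subst (fun j => .var (s j))} (fun x => Iff.rfl)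
    have h7 := ih (fun p' hp' => hP p' (by simp [hp'])) h6
      (fun b hb => hB b hb.1) (fun b hb => ⟨hBK hb, fun he => hq (he ▸ hb)⟩)
    convert h7 using 1
    ext x
    simp only [Set.mem_ofPred_eq, List.mem_cons, not_or, and_assoc]


/-! ## `RS` is a finite unification set -/

def evV (π : ℕ → Val) : FTerm → Val
  | .var j => π j
  | .const n => .c n

theorem sat_J (F : List FAtom) (π : ℕ → Val) (a : FAtom) :
    a.sat (J F) π ↔ JR F a.pred (a.args.map (evV π)) := by
  have : FTerm.eval (J F) π = evV π := by
    funext t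
    cases t <;> rfl
  simp only [FAtom.sat, this]

def vn : Val → ℕ
  | .c n => n
  | .nl _ _ => 0

def rn (N : ℕ → FTerm) : FTerm → FTerm
  | .var v => .var v
  | .const n => N n

def ren (N : ℕ → FTerm) (a : FAtom) : FAtom := ⟨a.pred, a.args.map (rn N)⟩

def fp (F : List FAtom) (π : ℕ → Val) (a : FAtom) : Prop := fRel F a.pred (a.args.map (evV π))

def ZOK (F Q : List FAtom) (π : ℕ → Val) (Rf : FAtom → ERule) (tf : FAtom → ℕ → ℕ) : Prop :=
  ∀ a ∈ Q, ¬ fp F π a → trig (Rf a) F (tf a) ∧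
    tRel (Rf a) (tf a) a.pred (a.args.map (evV π)) ∧
    ((Rf a = rho) ∨ (Rf a = goalR ∧ a = aG))

open Classical in
noncomputable def F0 (F Q : List FAtom) (π : ℕ → Val) (Rf : FAtom → ERule)
    (tf : FAtom → ℕ → ℕ) : List FAtom :=
  (Q.filter (fun a => decide (fp F π a))).map (fun a => a.subst (fun x => .const (vn (π x)))) ++
  (Q.filter (fun a => decide (¬ fp F π a))).flatMap
    (fun a => (Rf a).body.map (FAtom.subst (gs (tf a))))

theorem mem_F0 {F Q : List FAtom} {π : ℕ → Val} {Rf : FAtom → ERule} {tf : FAtom → ℕ → ℕ}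
    {x : FAtom} : x ∈ F0 F Q π Rf tf ↔
      (∃ a ∈ Q, fp F π a ∧ x = a.subst (fun x => .const (vn (π x)))) ∨
      ∃ a ∈ Q, ¬ fp F π a ∧ ∃ b ∈ (Rf a).body, x = b.subst (gs (tf a)) := by
  simp only [F0, List.mem_append, List.mem_map, List.mem_filter, List.mem_flatMap,
    decide_eq_true_eq, and_assoc, @eq_comm _ x]

theorem ZOK_exists {F Q : List FAtom} {π : ℕ → Val} (hsat : ∀ a ∈ Q, a.sat (J F) π) :
    ∃ Rf tf, ZOK F Q π Rf tf := by
  have : ∀ a : FAtom, ∃ (R : ERule) (τ : ℕ → ℕ), a ∈ Q → ¬ fp F π a → trig R F τ ∧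
      tRel R τ a.pred (a.args.map (evV π)) ∧ ((R = rho) ∨ (R = goalR ∧ a = aG)) := by
    intro a
    by_cases ha : a ∈ Q ∧ ¬ fp F π a
    · have h1 := hsat a ha.1
      rw [sat_J] at h1
      rcases h1 with h1 | ⟨τ, h1, h2⟩ | ⟨τ, h1, h2⟩
      · exact absurd h1 ha.2
      · exact ⟨rho, τ, fun _ _ => ⟨h1, h2, Or.inl rfl⟩⟩
      · refine ⟨goalR, τ, fun _ _ => ⟨h1, h2, Or.inr ⟨rfl, ?_⟩⟩⟩
        obtain ⟨a0, ha0, h3, h4⟩ := h2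
        simp [goalR] at ha0
        subst ha0
        obtain ⟨p, args⟩ := a
        simp [aG] at h3 h4 ⊢
        exact ⟨h3, h4⟩
    · exact ⟨rho, fun _ => 0, fun h1 h2 => absurd ⟨h1, h2⟩ ha⟩
  choose Rf tf h using this
  exact ⟨Rf, tf, h⟩

theorem rho_body_var {b : FAtom} (hb : b ∈ rhoBody) {t : FTerm} (ht : t ∈ b.args) :
    ∃ j < 11, t = .var j := by
  have : ∀ a ∈ rho.body, ∀ t ∈ a.args, ∃ j < 11, t = FTerm.var j := by decide
  exact this b hb t ht

theorem goal_body_var {b : FAtom} (hb : b ∈ goalBody) {t : FTerm} (ht : t ∈ b.args) :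
    ∃ j < 11, t = .var j := by
  have : ∀ a ∈ goalR.body, ∀ t ∈ a.args, ∃ j < 11, t = FTerm.var j := by decide
  exact this b hb t ht

theorem ren_gs {b : FAtom} (hb : ∀ t ∈ b.args, ∃ j < 11, t = .var j) (N : ℕ → FTerm)
    (τ : ℕ → ℕ) : ren N (b.subst (gs τ)) = b.subst (fun j => N (τ j)) := by
  simp only [ren, FAtom.subst, FAtom.mk.injEq, true_and, List.map_map]
  apply List.map_congr_left
  intro t ht
  obtain ⟨j, -, rfl⟩ := hb t ht
  rfl

theorem core {F Q : List FAtom} {π : ℕ → Val} {Rf : FAtom → ERule} {tf : FAtom → ℕ → ℕ}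
    (hlab : ∀ x τ j, π x = .nl τ j → Labelled Q π τ)
    (hZ : ZOK F Q π Rf tf) (hne : ∃ a ∈ Q, ¬ fp F π a)
    (BB : ℕ) (hBB0 : 20 < BB) (hBB : ∀ a ∈ Q, ∀ j, .var j ∈ a.args → j + 20 < BB)
    (N : ℕ → FTerm) (hN : ∀ c, N c = .const c ∨ ∃ i, BB ≤ i ∧ N c = .var i)
    (hNQ : ∀ c ∈ CF Q, N c = .const c) :
    isRewriting RS Q ((F0 F Q π Rf tf).map (ren N)) := by
  classical
  -- bodies of triggers
  have hbv : ∀ a ∈ Q, ¬ fp F π a → ∀ b ∈ (Rf a).body, ∀ t ∈ b.args, ∃ j < 11, t = .var j := by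
    intro a ha hf b hb t ht
    rcases (hZ a ha hf).2.2 with h | ⟨h, -⟩
    · rw [h] at hb; exact rho_body_var hb ht
    · rw [h] at hb; exact goal_body_var hb ht
  let B : Set FAtom := {x | ∃ a ∈ Q, ¬ fp F π a ∧ ∃ b ∈ (Rf a).body,
    x = b.subst (fun j => N (tf a j))}
  have hBv : ∀ x ∈ B, ∀ j, .var j ∈ x.args → BB ≤ j := by
    rintro x ⟨a, ha, hf, b, hb, rfl⟩ j hj
    simp only [FAtom.subst, List.mem_map] at hj
    obtain ⟨t, ht, hj⟩ := hj
    obtain ⟨i, -, rfl⟩ := hbv a ha hf b hb t ht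
    rcases hN (tf a i) with h | ⟨k, hk, h⟩
    · simp [FTerm.subst, h] at hj
    · simp [FTerm.subst, h] at hj
      omega
  have hBE : ∃ t, (⟨0, [t]⟩ : FAtom) ∈ B := by
    obtain ⟨a, ha, hf⟩ := hne
    refine ⟨N (tf a 0), a, ha, hf, A1 0 0, ?_, by simp [FAtom.subst, FTerm.subst]⟩
    rcases (hZ a ha hf).2.2 with h | ⟨h, -⟩
    · rw [h]; decide
    · rw [h]; decide
  obtain ⟨tB, htB⟩ := hBE
  -- the choice of w
  have hw : ∃ w, w + 20 < BB ∧ (∀ x, x ≠ 0 → x = w → ∃ τ j, π x = .nl τ j) ∧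
      ((∃ a ∈ Q, ¬ fp F π a ∧ Rf a = rho) → A1 0 w ∈ Q) ∧ (A1 0 w ∈ Q ∨ (w = 0 ∧ aG ∈ Q)) := by
    by_cases h : ∃ a ∈ Q, ¬ fp F π a ∧ Rf a = rho
    · obtain ⟨a, ha, hf, hR⟩ := id h
      obtain ⟨-, ⟨a0, ha0, h1, h2⟩, -⟩ := hZ a ha hf
      rw [hR] at ha0
      have hnull : ∃ t ∈ a0.args, ∃ j, ev (tf a) t = .nl (tf a) j := by
        rcases rho_head_shape ha0 with ⟨i, hi, rfl⟩ | ⟨q, i, j, hq, hij | hij, rfl⟩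
        · exact ⟨.var i, by simp, i, by simp [ev, Nat.not_lt.2 hi]⟩
        · exact ⟨.var i, by simp, i, by simp [ev, Nat.not_lt.2 hij]⟩
        · exact ⟨.var j, by simp, j, by simp [ev, Nat.not_lt.2 hij]⟩
      obtain ⟨t, ht, j, hj⟩ := hnull
      have h3 : Val.nl (tf a) j ∈ a.args.map (evV π) := by
        rw [h2, ← hj]
        exact List.mem_map_of_mem ht
      simp only [List.mem_map] at h3
      obtain ⟨s, hs, h3⟩ := h3
      cases s with
      | const n => simp [evV] at h3
      | var x =>
        obtain ⟨w, j', h4, h5⟩ := hlab x _ _ h3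
        exact ⟨w, hBB _ h4 w (by simp), fun y _ hy => ⟨_, _, hy ▸ h5⟩, fun _ => h4, Or.inl h4⟩
    · refine ⟨0, by omega, fun x h1 h2 => absurd h2 h1, fun h' => absurd h' h, Or.inr ⟨rfl, ?_⟩⟩
      obtain ⟨a, ha, hf⟩ := hne
      rcases (hZ a ha hf).2.2 with h' | ⟨-, h'⟩
      · exact absurd ⟨a, ha, hf, h'⟩ h
      · exact h' ▸ ha
  obtain ⟨w, hwB, hwnull, hwE, hw0⟩ := hw
  let s1 : ℕ → ℕ := fun x => (if x = 0 then w else x) + 20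
  let σ1 : ℕ → FTerm := fun x => .var (s1 x)
  have hs1 : ∀ a ∈ Q, ∀ j, .var j ∈ a.args → s1 j < BB := by
    intro a ha j hj
    have := hBB a ha j hj
    simp only [s1]
    split_ifs <;> omega
  let K1 : Set FAtom := {x | ∃ a ∈ Q, x = a.subst σ1}
  have hK1B : ∀ b ∈ K1, ∀ j, .var j ∈ b.args → 20 ≤ j ∧ j < BB := by
    rintro b ⟨a, ha, rfl⟩ j hj
    simp only [FAtom.subst, List.mem_map] at hj
    obtain ⟨t, ht, hj⟩ := hj
    cases t with
    | const n => simp [FTerm.subst] at hj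
    | var i =>
      simp only [FTerm.subst, σ1, FTerm.var.injEq] at hj
      rw [← hj]
      refine ⟨?_, hs1 a ha i ht⟩
      simp only [s1]
      omega
  have hBig1 : Big K1 := fun b hb j hj => (hK1B b hb j hj).1
  have h0 : Reach Q {x | x ∈ Q} := ⟨Q, Relation.ReflTransGen.refl, fun x => Iff.rfl⟩
  have h1 : Reach Q K1 := by
    rcases hw0 with hw0 | ⟨-, hG⟩
    · have hE : (A1 0 0).subst σ1 = (A1 0 w).subst σ1 := by
        simp [FAtom.subst, FTerm.subst, σ1, s1]
      refine h0.step (R := tautE) (by simp [RS]) hw0 (a := A1 0 0) (by simp [tautE]) σ1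
        hE.symm ?_ K1 ?_
      · rintro z ⟨⟨a, ha, hz⟩, hz2⟩
        exact absurd ⟨a, ha, hz⟩ hz2
      · intro x
        constructor
        · rintro ⟨b, hb, rfl⟩
          by_cases hbp : b = A1 0 w
          · right
            exact ⟨A1 0 0, by simp [tautE], by rw [hbp, hE]⟩
          · left
            exact ⟨b, hb, hbp, rfl⟩
        · rintro (⟨b, hb, -, rfl⟩ | ⟨b, hb, rfl⟩)
          · exact ⟨b, hb, rfl⟩
          · simp [tautE] at hb
            subst hb
            exact ⟨_, hw0, hE⟩
    · refine h0.step (R := tautG) (by simp [RS]) hG (a := aG) (by simp [tautG]) σ1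
        rfl ?_ K1 ?_
      · rintro z ⟨⟨a, ha, hz⟩, hz2⟩
        exact absurd ⟨a, ha, hz⟩ hz2
      · intro x
        constructor
        · rintro ⟨b, hb, rfl⟩
          by_cases hbp : b = aG
          · right
            exact ⟨aG, by simp [tautG], by rw [hbp]⟩
          · left
            exact ⟨b, hb, hbp, rfl⟩
        · rintro (⟨b, hb, -, rfl⟩ | ⟨b, hb, rfl⟩)
          · exact ⟨b, hb, rfl⟩
          · simp [tautG] at hb
            subst hb
            exact ⟨_, hG, rfl⟩
  have hGs : ∀ a : FAtom, a.subst σ1 = aG → a = aG := by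
    rintro ⟨p, args⟩ h
    simp [FAtom.subst, aG] at h ⊢
    exact h
  have hGR : ∀ a ∈ Q, ¬ fp F π a → (a = aG ↔ Rf a = goalR) := by
    intro a ha hf
    obtain ⟨-, ⟨a0, ha0, h3, h4⟩, h | ⟨h, h'⟩⟩ := hZ a ha hf
    · constructor
      · rintro rfl
        rw [h] at ha0
        exfalso
        rcases rho_head_shape ha0 with ⟨i, hi, rfl⟩ | ⟨q, i, j, hq, hij, rfl⟩
        · simp [aG] at h3
        · simp [aG] at h3
          omega
      · intro h'
        rw [h] at h'
        simp [rho, goalR, rhoHead] at h'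
    · exact ⟨fun _ => h, fun _ => h'⟩
  -- remove the goal atom
  let K2 : Set FAtom := {x | (x ∈ K1 ∧ ¬ (x = aG ∧ ¬ fp F π aG)) ∨
    ∃ a ∈ Q, ¬ fp F π a ∧ Rf a = goalR ∧ ∃ b ∈ goalBody, x = b.subst (fun j => N (tf a j))}
  have h2 : Reach Q K2 := by
    by_cases hG : aG ∈ Q ∧ ¬ fp F π aG
    · refine h1.remG hBig1 ⟨aG, hG.1, rfl⟩ (fun j => N (tf aG j)) K2 ?_
      intro x
      constructor
      · rintro (⟨h3, h4⟩ | ⟨a, ha, hf, hR, b, hb, rfl⟩)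
        · exact Or.inl ⟨h3, fun h => h4 ⟨h, hG.2⟩⟩
        · rw [← hGR a ha hf] at hR
          subst hR
          exact Or.inr ⟨b, hb, rfl⟩
      · rintro (⟨h3, h4⟩ | ⟨b, hb, rfl⟩)
        · exact Or.inl ⟨h3, fun h => h4 h.1⟩
        · exact Or.inr ⟨aG, hG.1, hG.2, (hGR aG hG.1 hG.2).1 rfl, b, hb, rfl⟩
    · have : K2 = K1 := by
        ext x
        constructor
        · rintro (⟨h3, h4⟩ | ⟨a, ha, hf, hR, b, hb, rfl⟩)
          · exact h3
          · rw [← hGR a ha hf] at hR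
            subst hR
            exact absurd ⟨ha, hf⟩ hG
        · intro h
          refine Or.inl ⟨h, ?_⟩
          rintro ⟨rfl, hf⟩
          obtain ⟨a, ha, h⟩ := h
          exact hG ⟨hGs a h.symm ▸ ha, hf⟩
      rw [this]
      exact h1
  have hK2B : ∀ x ∈ K2, x ∈ K1 ∨ x ∈ B := by
    rintro x (⟨h3, -⟩ | ⟨a, ha, hf, hR, b, hb, rfl⟩)
    · exact Or.inl h3
    · exact Or.inr ⟨a, ha, hf, b, by rw [hR]; exact hb, rfl⟩
  have hBig2 : Big K2 := by
    intro b hb j hj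
    rcases hK2B b hb with h | h
    · exact hBig1 b h j hj
    · have := hBv b h j hj
      omega
  have hE2 : ∃ t, (⟨0, [t]⟩ : FAtom) ∈ K2 := by
    by_cases hr : ∃ a ∈ Q, ¬ fp F π a ∧ Rf a = rho
    · refine ⟨σ1 w, Or.inl ⟨⟨_, hwE hr, rfl⟩, ?_⟩⟩
      simp [aG]
    · obtain ⟨a, ha, hf⟩ := hne
      rcases (hZ a ha hf).2.2 with h | ⟨h, -⟩
      · exact absurd ⟨a, ha, hf, h⟩ hr
      · exact ⟨N (tf a 0), Or.inr ⟨a, ha, hf, h, A1 0 0, by decide, by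
          simp [FAtom.subst, FTerm.subst]⟩⟩
  obtain ⟨t2, ht2⟩ := hE2
  let Ts : List (ℕ → FTerm) := (Q.filter (fun a => decide (¬ fp F π a ∧ Rf a = rho))).map
    (fun a j => N (tf a j))
  have hTs : ∀ κ, κ ∈ Ts ↔ ∃ a ∈ Q, ¬ fp F π a ∧ Rf a = rho ∧ κ = fun j => N (tf a j) := by
    intro κ
    simp only [Ts, List.mem_map, List.mem_filter, decide_eq_true_eq, and_assoc, @eq_comm _ κ]
  have h3 := Reach.addL Ts (by
    intro κ hκ j i hi
    obtain ⟨a, -, -, -, rfl⟩ := (hTs κ).1 hκ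
    rcases hN (tf a j) with h | ⟨k, hk, h⟩
    · simp [h] at hi
    · simp [h] at hi
      omega) h2 hBig2 ht2
  let K3 : Set FAtom := {x | (x ∈ K1 ∧ ¬ (x = aG ∧ ¬ fp F π aG)) ∨ x ∈ B}
  have hK3 : {x | x ∈ K2 ∨ ∃ κ ∈ Ts, ∃ b ∈ rhoBody, x = b.subst κ} = K3 := by
    ext x
    constructor
    · rintro ((h | ⟨a, ha, hf, hR, b, hb, rfl⟩) | ⟨κ, hκ, b, hb, rfl⟩)
      · exact Or.inl h
      · exact Or.inr ⟨a, ha, hf, b, by rw [hR]; exact hb, rfl⟩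
      · obtain ⟨a, ha, hf, hR, rfl⟩ := (hTs κ).1 hκ
        exact Or.inr ⟨a, ha, hf, b, by rw [hR]; exact hb, rfl⟩
    · rintro (h | ⟨a, ha, hf, b, hb, rfl⟩)
      · exact Or.inl (Or.inl h)
      · rcases (hZ a ha hf).2.2 with h | ⟨h, -⟩
        · rw [h] at hb
          exact Or.inr ⟨_, (hTs _).2 ⟨a, ha, hf, h, rfl⟩, b, hb, rfl⟩
        · rw [h] at hb
          exact Or.inl (Or.inr ⟨a, ha, hf, h, b, hb, rfl⟩)
  rw [hK3] at h3
  have hBig3 : Big K3 := by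
    rintro b (⟨h, -⟩ | h) j hj
    · exact hBig1 b h j hj
    · have := hBv b h j hj
      omega
  let Ps : List FAtom := ((Q.filter (fun a => decide (¬ fp F π a ∧ Rf a = rho))).map
    (fun a => a.subst σ1)).filter (fun x => decide (¬ ∃ a' ∈ Q, fp F π a' ∧ x = a'.subst σ1))
  have hPs : ∀ x, x ∈ Ps ↔ (∃ a ∈ Q, ¬ fp F π a ∧ Rf a = rho ∧ x = a.subst σ1) ∧
      ¬ ∃ a' ∈ Q, fp F π a' ∧ x = a'.subst σ1 := by
    intro x
    simp only [Ps, List.mem_map, List.mem_filter, decide_eq_true_eq, and_assoc, @eq_comm _ x]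
  have h4 := Reach.remL htB Ps (by
    intro p hp
    obtain ⟨⟨a, ha, hf, hR, rfl⟩, -⟩ := (hPs p).1 hp
    obtain ⟨-, ⟨a0, ha0, h5, h6⟩, -⟩ := hZ a ha hf
    rw [hR] at ha0
    constructor
    · intro hB'
      have hnull : ∃ t ∈ a0.args, ∃ j, ev (tf a) t = .nl (tf a) j := by
        rcases rho_head_shape ha0 with ⟨i, hi, rfl⟩ | ⟨q, i, j, hq, hij | hij, rfl⟩
        · exact ⟨.var i, by simp, i, by simp [ev, Nat.not_lt.2 hi]⟩
        · exact ⟨.var i, by simp, i, by simp [ev, Nat.not_lt.2 hij]⟩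
        · exact ⟨.var j, by simp, j, by simp [ev, Nat.not_lt.2 hij]⟩
      obtain ⟨t, ht, j, hj⟩ := hnull
      have h7 : Val.nl (tf a) j ∈ a.args.map (evV π) := by
        rw [h6, ← hj]
        exact List.mem_map_of_mem ht
      simp only [List.mem_map] at h7
      obtain ⟨s, hs, h7⟩ := h7
      cases s with
      | const n => simp [evV] at h7
      | var x =>
        have h8 := hBv _ hB' (s1 x) (List.mem_map.2 ⟨_, hs, rfl⟩)
        have h9 := hs1 a ha x hs
        omega
    · refine ⟨a, a0, s1, rfl, ha0, evV π, tf a, fun j => N (tf a j), fun n => rfl, h5, h6, ?_, ?_⟩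
      · intro n hn j hj hjn
        simp only [hjn]
        exact hNQ n ⟨a, ha, hn⟩
      · intro b hb
        exact ⟨a, ha, hf, b, by rw [hR]; exact hb, rfl⟩) h3 hBig3 (fun x hx => Or.inr hx)
  have hK4 : {x | x ∈ K3 ∧ x ∉ Ps} =
      {x | (∃ a ∈ Q, fp F π a ∧ x = a.subst σ1) ∨ x ∈ B} := by
    ext x
    constructor
    · rintro ⟨⟨⟨a, ha, rfl⟩, h5⟩ | h5, h6⟩
      · left
        by_contra h7
        have hf : ¬ fp F π a := fun hf => h7 ⟨a, ha, hf, rfl⟩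
        rcases (hZ a ha hf).2.2 with h | ⟨-, rfl⟩
        · exact h6 ((hPs _).2 ⟨⟨a, ha, hf, h, rfl⟩, h7⟩)
        · exact h5 ⟨rfl, hf⟩
      · exact Or.inr h5
    · rintro (⟨a, ha, hf, rfl⟩ | h5)
      · refine ⟨Or.inl ⟨⟨a, ha, rfl⟩, ?_⟩, ?_⟩
        · rintro ⟨h5, h6⟩
          exact h6 (hGs a h5 ▸ hf)
        · intro h5
          exact ((hPs _).1 h5).2 ⟨a, ha, hf, rfl⟩
      · refine ⟨Or.inr h5, ?_⟩
        intro h6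
        obtain ⟨⟨a, ha, hf, hR, rfl⟩, -⟩ := (hPs x).1 h6
        obtain ⟨-, ⟨a0, ha0, h7, h8⟩, -⟩ := hZ a ha hf
        rw [hR] at ha0
        have hnull : ∃ t ∈ a0.args, ∃ j, ev (tf a) t = .nl (tf a) j := by
          rcases rho_head_shape ha0 with ⟨i, hi, rfl⟩ | ⟨q, i, j, hq, hij | hij, rfl⟩
          · exact ⟨.var i, by simp, i, by simp [ev, Nat.not_lt.2 hi]⟩
          · exact ⟨.var i, by simp, i, by simp [ev, Nat.not_lt.2 hij]⟩
          · exact ⟨.var j, by simp, j, by simp [ev, Nat.not_lt.2 hij]⟩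
        obtain ⟨t, ht, j, hj⟩ := hnull
        have h9 : Val.nl (tf a) j ∈ a.args.map (evV π) := by
          rw [h8, ← hj]
          exact List.mem_map_of_mem ht
        simp only [List.mem_map] at h9
        obtain ⟨s, hs, h9⟩ := h9
        cases s with
        | const n => simp [evV] at h9
        | var x =>
          have h10 := hBv _ h5 (s1 x) (List.mem_map.2 ⟨_, hs, rfl⟩)
          have h11 := hs1 a ha x hs
          omega
  rw [hK4] at h4
  let σf : ℕ → FTerm := fun j =>
    if j < BB then N (vn (if j - 20 = w then π 0 else π (j - 20))) else .var j
  refine h4.specL ?_ (t := tB) (Or.inr htB) σf _ ?_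
  · rintro b (⟨a, ha, hf, rfl⟩ | hb) j hj
    · exact hBig1 _ ⟨a, ha, rfl⟩ j hj
    · have := hBv b hb j hj
      omega
  have hBσ : ∀ x ∈ B, x.subst σf = x := by
    intro x hx
    apply subst_id
    intro j hj
    have := hBv x hx j hj
    simp [σf, Nat.not_lt.2 this]
  have hrest : ∀ a ∈ Q, fp F π a → (a.subst σ1).subst σf =
      ren N (a.subst (fun x => .const (vn (π x)))) := by
    intro a ha hf
    simp only [FAtom.subst, ren, FAtom.mk.injEq, true_and, List.map_map]
    apply List.map_congr_left
    intro t ht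
    cases t with
    | const n =>
      simp only [Function.comp, FTerm.subst, rn]
      exact (hNQ n ⟨a, ha, ht⟩).symm
    | var x =>
      have hb := hs1 a ha x ht
      simp only [Function.comp, FTerm.subst, rn, σ1, σf, hb, if_true]
      by_cases hx : x = 0
      · simp [s1, hx]
      · have hxw : x ≠ w := by
          intro hxw
          obtain ⟨τ, j, hnl⟩ := hwnull x hx hxw
          have := fRel_c hf (Val.nl τ j) (List.mem_map.2 ⟨_, ht, hnl⟩)
          obtain ⟨n, hn⟩ := this
          cases hn
        simp [s1, hx, hxw]
  intro x
  simp only [List.mem_map, mem_F0]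
  constructor
  · rintro ⟨y, ⟨a, ha, hf, rfl⟩ | ⟨a, ha, hf, b, hb, rfl⟩, rfl⟩
    · exact ⟨_, Or.inl ⟨a, ha, hf, rfl⟩, (hrest a ha hf).symm⟩
    · rw [ren_gs (hbv a ha hf b hb)]
      have : b.subst (fun j => N (tf a j)) ∈ B := ⟨a, ha, hf, b, hb, rfl⟩
      exact ⟨_, Or.inr this, (hBσ _ this).symm⟩
  · rintro ⟨y, ⟨a, ha, hf, rfl⟩ | hy, rfl⟩
    · exact ⟨_, Or.inl ⟨a, ha, hf, rfl⟩, (hrest a ha hf).symm⟩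
    · rw [hBσ _ hy]
      obtain ⟨a, ha, hf, b, hb, rfl⟩ := hy
      exact ⟨_, Or.inr ⟨a, ha, hf, b, hb, rfl⟩, ren_gs (hbv a ha hf b hb) N _⟩


/-! ## Bounded queries and the finite unification property -/

def tix : FTerm → ℕ
  | .var n => n
  | .const n => n

def abd (m : ℕ) (a : FAtom) : Prop := a.pred ≤ m ∧ a.args.length ≤ m ∧ ∀ t ∈ a.args, tix t ≤ m

theorem fin_lists {α : Type*} {s : Set α} (hs : s.Finite) (n : ℕ) :
    {l : List α | l.length ≤ n ∧ ∀ x ∈ l, x ∈ s}.Finite := by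
  induction n with
  | zero =>
    refine (Set.finite_singleton []).subset ?_
    rintro l ⟨hl, -⟩
    simpa using hl
  | succ n ih =>
    refine ((Set.finite_singleton []).union (Set.Finite.image2 List.cons hs ih)).subset ?_
    rintro l ⟨hl, h⟩
    cases l with
    | nil => left; rfl
    | cons a l =>
      right
      refine ⟨a, h a (by simp), l, ⟨by simpa using hl, fun x hx => h x (by simp [hx])⟩, rfl⟩

theorem fin_terms (m : ℕ) : {t : FTerm | tix t ≤ m}.Finite := by
  refine (((Set.finite_Iic m).image FTerm.var).union ((Set.finite_Iic m).image FTerm.const)).subset ?_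
  intro t ht
  cases t with
  | var n => exact Or.inl ⟨n, ht, rfl⟩
  | const n => exact Or.inr ⟨n, ht, rfl⟩

theorem fin_atoms (m : ℕ) : {a : FAtom | abd m a}.Finite := by
  refine (Set.Finite.image2 FAtom.mk (Set.finite_Iic m) (fin_lists (fin_terms m) m)).subset ?_
  rintro ⟨p, l⟩ ⟨h1, h2, h3⟩
  exact ⟨p, h1, l, ⟨h2, h3⟩, rfl⟩

theorem fin_queries (m : ℕ) : {Q : List FAtom | Q.length ≤ m ∧ ∀ a ∈ Q, abd m a}.Finite :=
  fin_lists (fin_atoms m) m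

theorem abd_mono {m m' : ℕ} (h : m ≤ m') {a : FAtom} (ha : abd m a) : abd m' a :=
  ⟨ha.1.trans h, ha.2.1.trans h, fun t ht => (ha.2.2 t ht).trans h⟩

theorem exists_list_bd (l : List FTerm) : ∃ m, ∀ t ∈ l, tix t ≤ m := by
  induction l with
  | nil => exact ⟨0, by simp⟩
  | cons t l ih =>
    obtain ⟨m, hm⟩ := ih
    refine ⟨max m (tix t), ?_⟩
    intro s hs
    simp at hs
    rcases hs with rfl | hs
    · exact le_max_right _ _
    · exact (hm s hs).trans (le_max_left _ _)

theorem exists_bd (Q : List FAtom) : ∃ m, 6 ≤ m ∧ ∀ a ∈ Q, abd m a := by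
  induction Q with
  | nil => exact ⟨6, le_rfl, by simp⟩
  | cons a Q ih =>
    obtain ⟨m, h6, hm⟩ := ih
    obtain ⟨k, hk⟩ := exists_list_bd a.args
    refine ⟨m + a.pred + a.args.length + k, by omega, ?_⟩
    intro b hb
    simp at hb
    rcases hb with rfl | hb
    · exact ⟨by omega, by omega, fun t ht => (hk t ht).trans (by omega)⟩
    · exact abd_mono (by omega) (hm b hb)

theorem length_flatMap_le {α β : Type*} (l : List α) (f : α → List β) (k : ℕ)
    (h : ∀ a ∈ l, (f a).length ≤ k) : (l.flatMap f).length ≤ l.length * k := by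
  induction l with
  | nil => simp
  | cons a l ih =>
    have h1 := h a (by simp)
    have h2 := ih (fun b hb => h b (by simp [hb]))
    simp only [List.flatMap_cons, List.length_append, List.length_cons, add_mul, one_mul]
    omega

theorem body_len {R : ERule} (h : R = rho ∨ R = goalR) : R.body.length ≤ 21 := by
  rcases h with rfl | rfl <;> decide

theorem body_abd {R : ERule} (h : R = rho ∨ R = goalR) :
    ∀ b ∈ R.body, b.pred ≤ 6 ∧ b.args.length ≤ 6 := by
  rcases h with rfl | rfl <;> decide

theorem F0_len {F Q : List FAtom} {π : ℕ → Val} {Rf : FAtom → ERule} {tf : FAtom → ℕ → ℕ}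
    (hZ : ZOK F Q π Rf tf) : (F0 F Q π Rf tf).length ≤ Q.length * 22 := by
  classical
  simp only [F0, List.length_append, List.length_map]
  have h1 := List.length_filter_le (fun a => decide (fp F π a)) Q
  have h2 := List.length_filter_le (fun a => decide (¬ fp F π a)) Q
  have h3 := length_flatMap_le (Q.filter (fun a => decide (¬ fp F π a)))
    (fun a => (Rf a).body.map (FAtom.subst (gs (tf a)))) 21 (by
      intro a ha
      simp only [List.mem_filter, decide_eq_true_eq] at ha
      rw [List.length_map]
      refine body_len ?_
      rcases (hZ a ha.1 ha.2).2.2 with h | ⟨h, -⟩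
      · exact Or.inl h
      · exact Or.inr h)
  have h4 := Nat.mul_le_mul_right 21 h2
  omega

theorem F0_ground {F Q : List FAtom} {π : ℕ → Val} {Rf : FAtom → ERule} {tf : FAtom → ℕ → ℕ}
    (hZ : ZOK F Q π Rf tf) : isFactBase (F0 F Q π Rf tf) := by
  intro x hx
  rw [mem_F0] at hx
  rcases hx with ⟨a, ha, hf, rfl⟩ | ⟨a, ha, hf, b, hb, rfl⟩
  · intro t ht
    simp only [FAtom.subst, List.mem_map] at ht
    obtain ⟨s, hs, rfl⟩ := ht
    cases s <;> exact ⟨_, rfl⟩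
  · intro t ht
    simp only [FAtom.subst, List.mem_map] at ht
    obtain ⟨s, hs, rfl⟩ := ht
    cases s <;> exact ⟨_, rfl⟩

theorem fp_mem {F : List FAtom} (hF : isFactBase F) {π : ℕ → Val} {a : FAtom} (h : fp F π a) :
    a.subst (fun x => .const (vn (π x))) ∈ F := by
  obtain ⟨cs, h1, h2⟩ := (fRel_iff hF _ _).1 h
  have : a.args.map (FTerm.subst (fun x => .const (vn (π x)))) = cs.map FTerm.const := by
    have h3 : cs = (cs.map Val.c).map vn := by simp [Function.comp_def, vn]
    rw [h3, ← h1, List.map_map, List.map_map]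
    apply List.map_congr_left
    intro t _
    cases t <;> rfl
  simp only [FAtom.subst, this]
  exact h2

theorem F0_sub {F Q : List FAtom} (hF : isFactBase F) {π : ℕ → Val} {Rf : FAtom → ERule}
    {tf : FAtom → ℕ → ℕ} (hZ : ZOK F Q π Rf tf) : ∀ x ∈ F0 F Q π Rf tf, x ∈ F := by
  intro x hx
  rw [mem_F0] at hx
  rcases hx with ⟨a, ha, hf, rfl⟩ | ⟨a, ha, hf, b, hb, rfl⟩
  · exact fp_mem hF hf
  · exact (hZ a ha hf).1.2 b hb

theorem F0_abd {F Q : List FAtom} {π : ℕ → Val} {Rf : FAtom → ERule} {tf : FAtom → ℕ → ℕ}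
    (hZ : ZOK F Q π Rf tf) {m : ℕ} (h6 : 6 ≤ m) (hm : ∀ a ∈ Q, abd m a) :
    ∀ x ∈ F0 F Q π Rf tf, x.pred ≤ m ∧ x.args.length ≤ m := by
  intro x hx
  rw [mem_F0] at hx
  rcases hx with ⟨a, ha, hf, rfl⟩ | ⟨a, ha, hf, b, hb, rfl⟩
  · simp only [FAtom.subst, List.length_map]
    exact ⟨(hm a ha).1, (hm a ha).2.1⟩
  · simp only [FAtom.subst, List.length_map]
    have h : Rf a = rho ∨ Rf a = goalR := by
      rcases (hZ a ha hf).2.2 with h | ⟨h, -⟩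
      · exact Or.inl h
      · exact Or.inr h
    have := body_abd h b hb
    omega

theorem F0_entails {F Q : List FAtom} (hF : isFactBase F) {π : ℕ → Val} {Rf : FAtom → ERule}
    {tf : FAtom → ℕ → ℕ} (hZ : ZOK F Q π Rf tf) : entails (F0 F Q π Rf tf) RS Q := by
  rw [← J_univ (F0_ground hZ)]
  refine ⟨π, ?_⟩
  intro a ha
  rw [sat_J]
  by_cases hf : fp F π a
  · left
    rw [fRel_iff (F0_ground hZ)]
    obtain ⟨cs, h1, h2⟩ := (fRel_iff hF _ _).1 hf
    refine ⟨cs, h1, ?_⟩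
    have : a.args.map (FTerm.subst (fun x => .const (vn (π x)))) = cs.map FTerm.const := by
      have h3 : cs = (cs.map Val.c).map vn := by simp [Function.comp_def, vn]
      rw [h3, ← h1, List.map_map, List.map_map]
      apply List.map_congr_left
      intro t _
      cases t <;> rfl
    rw [mem_F0]
    left
    exact ⟨a, ha, hf, by simp only [FAtom.subst, this]⟩
  · obtain ⟨h1, h2, h3⟩ := hZ a ha hf
    have h4 : trig (Rf a) (F0 F Q π Rf tf) (tf a) :=
      ⟨h1.1, fun b hb => mem_F0.2 (Or.inr ⟨a, ha, hf, b, hb, rfl⟩)⟩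
    rcases h3 with h | ⟨h, -⟩
    · rw [h] at h4 h2
      exact Or.inr (Or.inl ⟨_, h4, h2⟩)
    · rw [h] at h4 h2
      exact Or.inr (Or.inr ⟨_, h4, h2⟩)

theorem RS_noconst : ∀ r ∈ RS, ∀ a, a ∈ r.body ∨ a ∈ r.head → ∀ t ∈ a.args, ∃ j, t = .var j := by
  have : ∀ r ∈ RS, ∀ a ∈ r.body ++ r.head, ∀ t ∈ a.args, t = FTerm.var (tix t) := by decide
  intro r hr a ha t ht
  exact ⟨_, this r hr a (by simpa using ha) t ht⟩

theorem ren_sound {F Q : List FAtom} (hg : isFactBase F) (he : entails F RS Q) (N : ℕ → FTerm)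
    (hNQ : ∀ c ∈ CF Q, N c = .const c) (F' : List FAtom)
    (h : entails F' [] (F.map (ren N))) : entails F' RS Q := by
  intro I hI hR
  obtain ⟨ν, hν⟩ := h I hI (by simp)
  let M : Interp := ⟨I.Dom, I.inh, I.rel, fun c => (N c).eval I ν⟩
  have hM1 : satFacts M F := by
    intro μ a ha
    have := hν (ren N a) (List.mem_map_of_mem ha)
    simp only [FAtom.sat, ren, List.map_map] at this ⊢
    have e : a.args.map (FTerm.eval M μ) = a.args.map (FTerm.eval I ν ∘ rn N) := by
      apply List.map_congr_left
      intro t ht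
      obtain ⟨c, rfl⟩ := hg a ha t ht
      rfl
    change I.rel _ (a.args.map (FTerm.eval M μ))
    rw [e]
    exact this
  have hM2 : ∀ r ∈ RS, r.sat M := by
    intro r hr μ hb
    have key : ∀ a, a ∈ r.body ∨ a ∈ r.head → ∀ μ : ℕ → I.Dom, (a.sat M μ ↔ a.sat I μ) := by
      intro a ha μ
      simp only [FAtom.sat]
      have : a.args.map (FTerm.eval M μ) = a.args.map (FTerm.eval I μ) := by
        apply List.map_congr_left
        intro t ht
        obtain ⟨j, rfl⟩ := RS_noconst r hr a ha t ht
        rfl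
      rw [this]
    obtain ⟨μ', h1, h2⟩ := hR r hr μ (fun a ha => (key a (Or.inl ha) μ).1 (hb a ha))
    exact ⟨μ', h1, fun a ha => (key a (Or.inr ha) μ').2 (h2 a ha)⟩
  obtain ⟨μ, hμ⟩ := he M hM1 hM2
  refine ⟨μ, ?_⟩
  intro a ha
  have := hμ a ha
  simp only [FAtom.sat] at this ⊢
  have e : a.args.map (FTerm.eval I μ) = a.args.map (FTerm.eval M μ) := by
    apply List.map_congr_left
    intro t ht
    cases t with
    | var j => rfl
    | const c =>
      simp only [FTerm.eval, M]
      rw [hNQ c ⟨a, ha, ht⟩]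
  change M.rel _ (a.args.map (FTerm.eval I μ))
  rw [e]
  exact this

open Classical in
theorem RS_FUS : isFUS RS := by
  intro Q
  obtain ⟨m, h6, hm⟩ := exists_bd Q
  let BB := m + 21
  let MM := BB + (Q.length * 22) * m + Q.length * 22
  let S : Set (List FAtom) := {Q' | (Q'.length ≤ MM ∧ ∀ a ∈ Q', abd MM a) ∧ isRewriting RS Q Q' ∧
    ∀ F', entails F' [] Q' → entails F' RS Q}
  have hS : S.Finite := (fin_queries MM).subset (fun _ h => h.1)
  refine ⟨hS.toFinset.toList, ?_, ?_⟩
  · intro Q' hQ'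
    simp only [Finset.mem_toList, Set.Finite.mem_toFinset] at hQ'
    exact hQ'.2.1
  intro F hF
  constructor
  swap
  · rintro ⟨Q', hQ', h⟩
    simp only [Finset.mem_toList, Set.Finite.mem_toFinset] at hQ'
    exact hQ'.2.2 F h
  intro hent
  obtain ⟨π0, hπ0⟩ := (J_univ hF Q).2 hent
  obtain ⟨π, hπ, hlab⟩ := fold hπ0
  obtain ⟨Rf, tf, hZ⟩ := ZOK_exists hπ
  by_cases hne : ∃ a ∈ Q, ¬ fp F π a
  swap
  · refine ⟨Q, ?_, ?_⟩
    · simp only [Finset.mem_toList, Set.Finite.mem_toFinset]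
      refine ⟨⟨by simp only [MM]; omega, fun a ha => abd_mono (by simp only [MM, BB]; omega) (hm a ha)⟩,
        Relation.ReflTransGen.refl, ?_⟩
      intro F' h I hI _
      exact h I hI (by simp)
    · intro I hI _
      refine ⟨fun x => I.cst (vn (π x)), ?_⟩
      intro a ha
      have hf : fp F π a := by
        by_contra hf
        exact hne ⟨a, ha, hf⟩
      have := hI (fun x => I.cst 0) _ (fp_mem hF hf)
      simp only [FAtom.sat, FAtom.subst, List.map_map] at this ⊢
      convert this using 1
      apply List.map_congr_left
      intro t _
      cases t <;> rfl
  let Lc : List ℕ := (F0 F Q π Rf tf).flatMap (fun a => a.args.map tix)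
  let N : ℕ → FTerm := fun c => if c ∈ CF Q then .const c else .var (BB + Lc.idxOf c)
  have hLc : ∀ x ∈ F0 F Q π Rf tf, ∀ c, .const c ∈ x.args → c ∈ Lc := by
    intro x hx c hc
    simp only [Lc, List.mem_flatMap]
    exact ⟨x, hx, List.mem_map.2 ⟨_, hc, rfl⟩⟩
  have hLl : Lc.length ≤ (Q.length * 22) * m := by
    refine (length_flatMap_le _ _ m ?_).trans (Nat.mul_le_mul_right m (F0_len hZ))
    intro a ha
    rw [List.length_map]
    exact (F0_abd hZ h6 hm a ha).2
  have hNQ : ∀ c ∈ CF Q, N c = .const c := fun c hc => by simp [N, hc]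
  refine ⟨(F0 F Q π Rf tf).map (ren N), ?_, ?_⟩
  · simp only [Finset.mem_toList, Set.Finite.mem_toFinset]
    refine ⟨⟨?_, ?_⟩, ?_, ?_⟩
    · rw [List.length_map]
      have := F0_len hZ
      simp only [MM]
      omega
    · intro a ha
      simp only [List.mem_map] at ha
      obtain ⟨x, hx, rfl⟩ := ha
      have h1 := F0_abd hZ h6 hm x hx
      refine ⟨by simp only [ren, MM, BB]; omega, by simp only [ren, MM, BB, List.length_map]; omega, ?_⟩
      intro t ht
      simp only [ren, List.mem_map] at ht
      obtain ⟨s, hs, rfl⟩ := ht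
      obtain ⟨c, rfl⟩ := F0_ground hZ x hx s hs
      simp only [rn, N]
      split_ifs with hc
      · obtain ⟨a, ha, hc⟩ := hc
        have := (hm a ha).2.2 _ hc
        simp only [tix, MM, BB] at this ⊢
        omega
      · have h2 : Lc.idxOf c ≤ Lc.length := List.idxOf_le_length
        simp only [tix, MM, BB] at hLl h2 ⊢
        omega
    · refine core hlab hZ hne BB (by simp only [BB]; omega) ?_ N ?_ hNQ
      · intro a ha j hj
        have := (hm a ha).2.2 _ hj
        simp only [tix, BB] at this ⊢
        omega
      · intro c
        simp only [N]
        split_ifs with hc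
        · exact Or.inl rfl
        · exact Or.inr ⟨_, by omega, rfl⟩
    · intro F' h
      exact ren_sound (F0_ground hZ) (F0_entails hF hZ) N hNQ F' h
  · intro I hI _
    refine ⟨fun i => I.cst (Lc.getD (i - BB) 0), ?_⟩
    intro a ha
    simp only [List.mem_map] at ha
    obtain ⟨x, hx, rfl⟩ := ha
    have := hI (fun x => I.cst 0) x (F0_sub hF hZ x hx)
    simp only [FAtom.sat, ren, List.map_map] at this ⊢
    convert this using 1
    apply List.map_congr_left
    intro t ht
    obtain ⟨c, rfl⟩ := F0_ground hZ x hx t ht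
    simp only [Function.comp, rn, N]
    split_ifs with hc
    · rfl
    · have h1 := hLc x hx c ht
      have h2 := List.idxOf_lt_length_iff.2 h1
      simp only [FTerm.eval, Nat.add_sub_cancel_left]
      rw [List.getD_eq_getElem _ _ h2, List.getElem_idxOf]


/-! ## Simulating two-stack machines with transitivity -/

abbrev Ins := ℕ × ℕ × ℕ × ℕ × ℕ

/-- Reachable configurations of a (branching) two-stack machine started on empty stacks. -/
inductive RB (P : List Ins) (q0 : ℕ) : ℕ → Turing.ListBlank ℕ → Turing.ListBlank ℕ → Prop
  | init : RB P q0 q0 default default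
  | keep {q a b q1 q2 : ℕ} {X Y : Turing.ListBlank ℕ} : RB P q0 q (X.cons a) Y →
      (q, a, b, q1, q2) ∈ P → RB P q0 q1 X (Y.cons b)
  | swap {q a b q1 q2 : ℕ} {X Y : Turing.ListBlank ℕ} : RB P q0 q (X.cons a) Y →
      (q, a, b, q1, q2) ∈ P → RB P q0 q2 (Y.cons b) X

def sy (a : ℕ) : ℕ := 4 + 2 * a
def st (q : ℕ) : ℕ := 5 + 2 * q

def fac (p : ℕ) (cs : List ℕ) : FAtom := ⟨p, cs.map FTerm.const⟩

def baseF (q0 qh : ℕ) : List FAtom :=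
  [fac 0 [1], fac 0 [2], fac 1 [2, sy 0], fac 2 [2, 1], fac 3 [2, 1],
   fac 0 [3], fac 1 [3, st q0], fac 2 [3, 1], fac 3 [3, 1],
   fac 2 [0, 0], fac 3 [0, 0], fac 1 [0, 0], fac 2 [0, 1], fac 3 [0, 1], fac 5 [st qh]]

def insF (i : Ins) : List FAtom :=
  [fac 4 [st i.1, sy i.2.1, sy i.2.2.1, st i.2.2.2.1, st i.2.2.2.2, 0],
   fac 1 [0, sy i.2.2.1], fac 1 [0, st i.2.2.2.1], fac 1 [0, st i.2.2.2.2]]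

def Fp (P : List Ins) (q0 qh : ℕ) : List FAtom := baseF q0 qh ++ P.flatMap insF

theorem fac_ground (p : ℕ) (cs : List ℕ) : (fac p cs).isGround := by
  intro t ht
  simp only [fac, List.mem_map] at ht
  obtain ⟨c, -, rfl⟩ := ht
  exact ⟨c, rfl⟩

theorem Fp_ground (P : List Ins) (q0 qh : ℕ) : isFactBase (Fp P q0 qh) := by
  intro a ha
  simp only [Fp, List.mem_append, List.mem_flatMap] at ha
  rcases ha with ha | ⟨i, -, ha⟩
  · simp only [baseF, List.mem_cons, List.not_mem_nil, or_false] at ha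
    rcases ha with rfl | rfl | rfl | rfl | rfl | rfl | rfl | rfl | rfl | rfl | rfl | rfl | rfl |
      rfl | rfl <;> exact fac_ground _ _
  · simp only [insF, List.mem_cons, List.not_mem_nil, or_false] at ha
    rcases ha with rfl | rfl | rfl | rfl <;> exact fac_ground _ _

/-! ### Soundness -/

inductive Dm where
  | u : Dm
  | nd : Turing.ListBlank ℕ → Dm
  | ed : ℕ → Turing.ListBlank ℕ → Dm
  | cf : ℕ → Turing.ListBlank ℕ → Turing.ListBlank ℕ → Dm
  | sy : ℕ → Dm
  | st : ℕ → Dm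

def DE (P : List Ins) (q0 : ℕ) : Dm → Prop
  | .nd _ => True
  | .ed _ _ => True
  | .cf q X Y => RB P q0 q X Y
  | _ => False

def DL : Dm → Dm → Prop
  | .u, _ => True
  | .ed a _, d => d = .sy a
  | .cf q _ _, d => d = .st q
  | _, _ => False

def DS : Dm → Dm → Prop
  | .u, .u => True
  | .u, .nd _ => True
  | .nd X, d => d = .nd X
  | .ed a X, d => d = .nd (X.cons a)
  | .cf _ X _, d => d = .nd X
  | _, _ => False

def DT : Dm → Dm → Prop
  | .u, .u => True
  | .u, .nd _ => True
  | .nd X, d => d = .nd X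
  | .ed _ X, d => d = .nd X
  | .cf _ _ Y, d => d = .nd Y
  | _, _ => False

def DD (P : List Ins) (l : List Dm) : Prop :=
  ∃ q a b q1 q2, (q, a, b, q1, q2) ∈ P ∧ l = [.st q, .sy a, .sy b, .st q1, .st q2, .u]

def Drel (P : List Ins) (q0 qh : ℕ) (p : ℕ) (l : List Dm) : Prop :=
  (p = 0 ∧ ∃ d, l = [d] ∧ DE P q0 d) ∨ (p = 1 ∧ ∃ d e, l = [d, e] ∧ DL d e) ∨
  (p = 2 ∧ ∃ d e, l = [d, e] ∧ DS d e) ∨ (p = 3 ∧ ∃ d e, l = [d, e] ∧ DT d e) ∨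
  (p = 4 ∧ DD P l) ∨ (p = 5 ∧ l = [.st qh]) ∨ (p = 6 ∧ l = [] ∧ ∃ X Y, RB P q0 qh X Y)

def Dcst (q0 : ℕ) : ℕ → Dm
  | 0 => .u
  | 1 => .nd default
  | 2 => .ed 0 default
  | 3 => .cf q0 default default
  | n + 4 => if n % 2 = 0 then .sy (n / 2) else .st (n / 2)

abbrev DM (P : List Ins) (q0 qh : ℕ) : Interp where
  Dom := Dm
  inh := ⟨.u⟩
  rel := Drel P q0 qh
  cst := Dcst q0

theorem Dcst_sy (q0 a : ℕ) : Dcst q0 (sy a) = .sy a := by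
  have : sy a = 2 * a + 4 := by simp only [sy]; omega
  rw [this]
  simp [Dcst]

theorem Dcst_st (q0 a : ℕ) : Dcst q0 (st a) = .st a := by
  have : st a = (2 * a + 1) + 4 := by simp only [st]; omega
  rw [this]
  simp only [Dcst]
  rw [if_neg (by omega)]
  congr 1
  omega

theorem fac_sat (I : Interp) (ν : ℕ → I.Dom) (p : ℕ) (cs : List ℕ) :
    (fac p cs).sat I ν ↔ I.rel p (cs.map I.cst) := by
  simp only [FAtom.sat, fac, List.map_map]
  rfl

theorem default_cons : (default : Turing.ListBlank ℕ).cons 0 = default := by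
  have := Turing.ListBlank.cons_head_tail (default : Turing.ListBlank ℕ)
  exact this

theorem DM_facts (P : List Ins) (q0 qh : ℕ) : satFacts (DM P q0 qh) (Fp P q0 qh) := by
  intro ν a ha
  simp only [Fp, List.mem_append, List.mem_flatMap] at ha
  rcases ha with ha | ⟨i, hi, ha⟩
  · simp only [baseF, List.mem_cons, List.not_mem_nil, or_false] at ha
    rcases ha with rfl | rfl | rfl | rfl | rfl | rfl | rfl | rfl | rfl | rfl | rfl | rfl | rfl |
      rfl | rfl <;> rw [fac_sat] <;> simp only [List.map_cons, List.map_nil, Dcst_sy, Dcst_st] <;>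
      simp [Drel, Dcst, DE, DL, DS, DT, default_cons, RB.init]
  · simp only [insF, List.mem_cons, List.not_mem_nil, or_false] at ha
    rcases ha with rfl | rfl | rfl | rfl <;> rw [fac_sat]
    · simp only [List.map_cons, List.map_nil, Dcst_sy, Dcst_st]
      exact Or.inr (Or.inr (Or.inr (Or.inr (Or.inl ⟨rfl, _, _, _, _, _, hi, rfl⟩))))
    all_goals simp [Drel, Dcst, DL]

theorem DS_trans {a b c : Dm} (h1 : DS a b) (h2 : DS b c) : DS a c := by
  cases a <;> cases b <;> simp_all [DS]

theorem DT_trans {a b c : Dm} (h1 : DT a b) (h2 : DT b c) : DT a c := by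
  cases a <;> cases b <;> simp_all [DT]

theorem Dr0 {P q0 qh d} : Drel P q0 qh 0 [d] ↔ DE P q0 d := by simp [Drel]
theorem Dr1 {P q0 qh d e} : Drel P q0 qh 1 [d, e] ↔ DL d e := by simp [Drel]
theorem Dr2 {P q0 qh d e} : Drel P q0 qh 2 [d, e] ↔ DS d e := by simp [Drel]
theorem Dr3 {P q0 qh d e} : Drel P q0 qh 3 [d, e] ↔ DT d e := by simp [Drel]
theorem Dr4 {P q0 qh l} : Drel P q0 qh 4 l ↔ DD P l := by simp [Drel]
theorem Dr5 {P q0 qh d} : Drel P q0 qh 5 [d] ↔ d = .st qh := by simp [Drel]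
theorem Dr6 {P q0 qh} : Drel P q0 qh 6 [] ↔ ∃ X Y, RB P q0 qh X Y := by simp [Drel]

theorem DM_trans2 (P : List Ins) (q0 qh : ℕ) : (transRule 2).sat (DM P q0 qh) := by
  intro ν h
  refine ⟨ν, fun _ _ => rfl, ?_⟩
  simp only [transRule, List.mem_cons, List.not_mem_nil, or_false, forall_eq_or_imp, forall_eq,
    FAtom.sat, List.map_cons, List.map_nil, FTerm.eval, Dr2] at h ⊢
  exact DS_trans h.1 h.2

theorem DM_trans3 (P : List Ins) (q0 qh : ℕ) : (transRule 3).sat (DM P q0 qh) := by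
  intro ν h
  refine ⟨ν, fun _ _ => rfl, ?_⟩
  simp only [transRule, List.mem_cons, List.not_mem_nil, or_false, forall_eq_or_imp, forall_eq,
    FAtom.sat, List.map_cons, List.map_nil, FTerm.eval, Dr3] at h ⊢
  exact DT_trans h.1 h.2

theorem rbv : ∀ v ∈ atomsVars rho.body, v < 11 := by
  rintro v ⟨a, ha, h⟩
  have : ∀ a ∈ rho.body, ∀ t ∈ a.args, ∃ j < 11, t = FTerm.var j := by decide
  obtain ⟨j, hj, hv⟩ := this a ha _ h
  simp at hv
  omega

/-- Valuation extension for the main rule. -/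
def extV {D : Type} (ν : ℕ → D) (g k k' z s t r r' : D) : ℕ → D
  | 11 => g
  | 12 => k
  | 13 => k'
  | 14 => z
  | 15 => s
  | 16 => t
  | 17 => r
  | 18 => r'
  | n => ν n

theorem extV_lt {D : Type} (ν : ℕ → D) (g k k' z s t r r' : D) (v : ℕ) (h : v < 11) :
    extV ν g k k' z s t r r' v = ν v := by
  interval_cases v <;> rfl

theorem DM_rho (P : List Ins) (q0 qh : ℕ) : rho.sat (DM P q0 qh) := by
  intro ν h
  simp only [rho, rhoBody, List.mem_cons, List.not_mem_nil, or_false, forall_eq_or_imp, forall_eq,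
    FAtom.sat, List.map_cons, List.map_nil, FTerm.eval, Dr0, Dr1, Dr2, Dr3, Dr4] at h
  obtain ⟨hf, hfq, hfx, hfy, he, hea, hex, hex', -, -, -, hD, -⟩ := h
  obtain ⟨q, a, b, q1, q2, hP, hD⟩ := hD
  simp only [List.cons.injEq, and_true] at hD
  obtain ⟨h1, h5, h7, h8, h9, h10⟩ := hD
  rw [h1] at hfq
  rw [h5] at hea
  cases hf0 : ν 0 <;> rw [hf0] at hf hfq hfx hfy <;> simp [DE, DL] at hf hfq
  rename_i q' X Y
  subst hfq
  simp only [DS, DT] at hfx hfy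
  cases he0 : ν 4 <;> rw [he0] at he hea hex hex' <;> simp [DE, DL] at he hea
  rename_i a' X'
  subst hea
  simp only [DS, DT] at hex hex'
  rw [hfx] at hex
  simp only [Dm.nd.injEq] at hex
  subst hex
  refine ⟨extV ν (.ed b Y) (.cf q1 X' (Y.cons b)) (.cf q2 (Y.cons b) X') (.nd (Y.cons b))
    (.nd (Y.cons b)) (.nd (Y.cons b)) .u .u, fun v hv => extV_lt _ _ _ _ _ _ _ _ _ v (rbv v hv), ?_⟩
  simp only [rho, rhoHead, List.mem_cons, List.not_mem_nil, or_false, forall_eq_or_imp, forall_eq,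
    FAtom.sat, List.map_cons, List.map_nil, FTerm.eval, Dr0, Dr1, Dr2, Dr3, Dr4, extV,
    h7, h8, h9, h10, hfx, hfy, hex']
  simp [DE, DL, DS, DT, RB.keep hf hP, RB.swap hf hP]

theorem DM_goal (P : List Ins) (q0 qh : ℕ) : goalR.sat (DM P q0 qh) := by
  intro ν h
  refine ⟨ν, fun _ _ => rfl, ?_⟩
  simp only [goalR, goalBody, aG, List.mem_cons, List.not_mem_nil, or_false, forall_eq_or_imp,
    forall_eq, FAtom.sat, List.map_cons, List.map_nil, FTerm.eval, Dr0, Dr1, Dr2, Dr3, Dr4, Dr5,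
    Dr6] at h ⊢
  obtain ⟨hf, hfq, hfx, hfy, -, -, hq⟩ := h
  rw [hq] at hfq
  cases hf0 : ν 0 <;> rw [hf0] at hf hfq <;> simp [DE, DL] at hf hfq
  subst hfq
  exact ⟨_, _, hf⟩

abbrev TR : List ERule := [transRule 2, transRule 3]

theorem sim_sound {P : List Ins} {q0 qh : ℕ} (h : entails (Fp P q0 qh) (RS ++ TR) [aG]) :
    ∃ X Y, RB P q0 qh X Y := by
  have := h (DM P q0 qh) (DM_facts P q0 qh) (by
    intro r hr
    simp only [RS, TR, List.cons_append, List.nil_append, List.mem_cons, List.not_mem_nil,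
      or_false] at hr
    rcases hr with rfl | rfl | rfl | rfl | rfl | rfl | rfl
    · exact DM_rho P q0 qh
    · exact DM_goal P q0 qh
    · exact rule_triv (by decide)
    · exact rule_triv (by decide)
    · exact rule_triv (by decide)
    · exact DM_trans2 P q0 qh
    · exact DM_trans3 P q0 qh)
  obtain ⟨ν, hν⟩ := this
  have := hν aG (by simp)
  exact Dr6.1 this

/-! ### Completeness -/

inductive Rep (I : Interp) : I.Dom → Turing.ListBlank ℕ → Prop
  | nil : Rep I (I.cst 1) default
  | cons {e d d' : I.Dom} {b : ℕ} {X : Turing.ListBlank ℕ} : Rep I d' X → I.rel 0 [e] →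
      I.rel 1 [e, I.cst (sy b)] → I.rel 2 [e, d] → I.rel 3 [e, d'] → I.rel 0 [d] →
      I.rel 2 [I.cst 0, d] → I.rel 3 [I.cst 0, d] → Rep I d (X.cons b)

theorem cons_inj {a b : ℕ} {X Y : Turing.ListBlank ℕ} (h : X.cons a = Y.cons b) :
    a = b ∧ X = Y := by
  constructor
  · simpa using congrArg Turing.ListBlank.head h
  · simpa using congrArg Turing.ListBlank.tail h

theorem sim_complete {P : List Ins} {q0 qh : ℕ} (h : ∃ X Y, RB P q0 qh X Y) :
    entails (Fp P q0 qh) (RS ++ TR) [aG] := by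
  intro I hI hR
  have hfacts : ∀ p cs, fac p cs ∈ Fp P q0 qh → I.rel p (cs.map I.cst) := by
    intro p cs hp
    exact (fac_sat I (fun _ => I.cst 0) p cs).1 (hI _ _ hp)
  have hb : ∀ p cs, fac p cs ∈ baseF q0 qh → I.rel p (cs.map I.cst) := by
    intro p cs hp
    exact hfacts p cs (by simp [Fp, hp])
  have hS : ∀ x y z, I.rel 2 [x, y] → I.rel 2 [y, z] → I.rel 2 [x, z] := by
    intro x y z h1 h2
    obtain ⟨ν', h3, h4⟩ := hR (transRule 2) (by simp [TR])
      (fun n => if n = 0 then x else if n = 1 then y else z) (by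
        simp [transRule, FAtom.sat, FTerm.eval, h1, h2])
    have := h4 _ (by simp [transRule]; rfl)
    simp only [FAtom.sat, List.map_cons, List.map_nil, FTerm.eval] at this
    rw [h3 0 ⟨_, by simp [transRule]; left; rfl, by simp⟩,
      h3 2 ⟨_, by simp [transRule]; right; rfl, by simp⟩] at this
    simpa using this
  have hT : ∀ x y z, I.rel 3 [x, y] → I.rel 3 [y, z] → I.rel 3 [x, z] := by
    intro x y z h1 h2
    obtain ⟨ν', h3, h4⟩ := hR (transRule 3) (by simp [TR])
      (fun n => if n = 0 then x else if n = 1 then y else z) (by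
        simp [transRule, FAtom.sat, FTerm.eval, h1, h2])
    have := h4 _ (by simp [transRule]; rfl)
    simp only [FAtom.sat, List.map_cons, List.map_nil, FTerm.eval] at this
    rw [h3 0 ⟨_, by simp [transRule]; left; rfl, by simp⟩,
      h3 2 ⟨_, by simp [transRule]; right; rfl, by simp⟩] at this
    simpa using this
  have hrep : ∀ d X, Rep I d X → I.rel 0 [d] ∧ I.rel 2 [I.cst 0, d] ∧ I.rel 3 [I.cst 0, d] := by
    intro d X h
    cases h with
    | nil => exact ⟨hb 0 [1] (by simp [baseF]), hb 2 [0, 1] (by simp [baseF]),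
        hb 3 [0, 1] (by simp [baseF])⟩
    | cons _ _ _ _ _ h1 h2 h3 => exact ⟨h1, h2, h3⟩
  have hpop : ∀ d a X, Rep I d (X.cons a) → ∃ e d', Rep I d' X ∧ I.rel 0 [e] ∧
      I.rel 1 [e, I.cst (sy a)] ∧ I.rel 2 [e, d] ∧ I.rel 3 [e, d'] := by
    intro d a X h
    generalize hY : X.cons a = Y at h
    cases h with
    | nil =>
      rw [← default_cons] at hY
      obtain ⟨rfl, rfl⟩ := cons_inj hY
      exact ⟨I.cst 2, I.cst 1, Rep.nil, hb 0 [2] (by simp [baseF]),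
        hb 1 [2, sy 0] (by simp [baseF]), hb 2 [2, 1] (by simp [baseF]),
        hb 3 [2, 1] (by simp [baseF])⟩
    | cons h0 h1 h2 h3 h4 =>
      obtain ⟨rfl, rfl⟩ := cons_inj hY
      exact ⟨_, _, h0, h1, h2, h3, h4⟩
  let Cf : ℕ → Turing.ListBlank ℕ → Turing.ListBlank ℕ → Prop := fun q X Y =>
    ∃ f x y, I.rel 0 [f] ∧ I.rel 1 [f, I.cst (st q)] ∧ I.rel 2 [f, x] ∧ I.rel 3 [f, y] ∧
      Rep I x X ∧ Rep I y Y
  have hstep : ∀ q a b q1 q2 X Y, Cf q (X.cons a) Y → (q, a, b, q1, q2) ∈ P →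
      Cf q1 X (Y.cons b) ∧ Cf q2 (Y.cons b) X := by
    rintro q a b q1 q2 X Y ⟨f, x, y, h1, h2, h3, h4, h5, h6⟩ hP
    obtain ⟨e, x', g1, g2, g3, g4, g5⟩ := hpop _ _ _ h5
    have hi : ∀ p cs, fac p cs ∈ insF (q, a, b, q1, q2) → I.rel p (cs.map I.cst) := by
      intro p cs hp
      refine hfacts p cs ?_
      simp only [Fp, List.mem_append, List.mem_flatMap]
      exact Or.inr ⟨_, hP, hp⟩
    have i1 := hi 4 [st q, sy a, sy b, st q1, st q2, 0] (by simp [insF])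
    have i2 := hi 1 [0, sy b] (by simp [insF])
    have i3 := hi 1 [0, st q1] (by simp [insF])
    have i4 := hi 1 [0, st q2] (by simp [insF])
    have i5 := hb 2 [0, 0] (by simp [baseF])
    have i6 := hb 3 [0, 0] (by simp [baseF])
    have i7 := hb 1 [0, 0] (by simp [baseF])
    simp only [List.map_cons, List.map_nil] at i1 i2 i3 i4 i5 i6 i7
    let l : List I.Dom := [f, I.cst (st q), x, y, e, I.cst (sy a), x', I.cst (sy b),
      I.cst (st q1), I.cst (st q2), I.cst 0]
    let ν : ℕ → I.Dom := fun n => l.getD n f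
    obtain ⟨ν', k1, k2⟩ := hR rho (by simp [RS]) ν (by
      simp only [rho, rhoBody, List.mem_cons, List.not_mem_nil, or_false, forall_eq_or_imp,
        forall_eq, FAtom.sat, List.map_cons, List.map_nil, FTerm.eval]
      exact ⟨h1, h2, h3, h4, g2, g3, g4, g5, (hrep _ _ h5).1, (hrep _ _ h6).1, (hrep _ _ g1).1,
        i1, i2, i3, i4, (hrep _ _ h6).2.2, (hrep _ _ g1).2.1, (hrep _ _ g1).2.2, i5, i6, i7⟩)
    have e3 : ν' 3 = y := k1 3 ⟨A2 3 0 3, by decide, by simp⟩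
    have e6 : ν' 6 = x' := k1 6 ⟨A1 0 6, by decide, by simp⟩
    have e7 : ν' 7 = I.cst (sy b) := k1 7 ⟨A2 1 10 7, by decide, by simp⟩
    have e8 : ν' 8 = I.cst (st q1) := k1 8 ⟨A2 1 10 8, by decide, by simp⟩
    have e9 : ν' 9 = I.cst (st q2) := k1 9 ⟨A2 1 10 9, by decide, by simp⟩
    have e10 : ν' 10 = I.cst 0 := k1 10 ⟨A2 1 10 9, by decide, by simp⟩
    simp only [rho, rhoHead, List.mem_cons, List.not_mem_nil, or_false, forall_eq_or_imp,
      forall_eq, FAtom.sat, List.map_cons, List.map_nil, FTerm.eval, e3, e6, e7, e8, e9, e10] at k2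
    obtain ⟨m1, m2, m3, m4, m5, m6, m7, m8, m9, m10, m11, m12, m13, m14, m15, m16, m17, -⟩ := k2
    have hz : Rep I (ν' 14) (Y.cons b) :=
      Rep.cons h6 m1 m5 (hS _ _ _ m11 m14) m8 m4 (hS _ _ _ m13 m14) (hT _ _ _ m16 m17)
    exact ⟨⟨_, _, _, m2, m6, m9, hT _ _ _ m15 m17, g1, hz⟩,
      ⟨_, _, _, m3, m7, hS _ _ _ m12 m14, m10, hz, g1⟩⟩
  have hall : ∀ q X Y, RB P q0 q X Y → Cf q X Y := by
    intro q X Y h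
    induction h with
    | init => exact ⟨I.cst 3, I.cst 1, I.cst 1, hb 0 [3] (by simp [baseF]),
        hb 1 [3, st q0] (by simp [baseF]), hb 2 [3, 1] (by simp [baseF]),
        hb 3 [3, 1] (by simp [baseF]), Rep.nil, Rep.nil⟩
    | keep _ hP ih => exact (hstep _ _ _ _ _ _ _ ih hP).1
    | swap _ hP ih => exact (hstep _ _ _ _ _ _ _ ih hP).2
  obtain ⟨X, Y, hXY⟩ := h
  obtain ⟨f, x, y, h1, h2, h3, h4, h5, h6⟩ := hall _ _ _ hXY
  have i1 := hb 5 [st qh] (by simp [baseF])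
  simp only [List.map_cons, List.map_nil] at i1
  let l : List I.Dom := [f, I.cst (st qh), x, y]
  let ν : ℕ → I.Dom := fun n => l.getD n f
  obtain ⟨ν', k1, k2⟩ := hR goalR (by simp [RS]) ν (by
      simp only [goalR, goalBody, List.mem_cons, List.not_mem_nil, or_false, forall_eq_or_imp,
        forall_eq, FAtom.sat, List.map_cons, List.map_nil, FTerm.eval]
      exact ⟨h1, h2, h3, h4, (hrep _ _ h5).1, (hrep _ _ h6).1, i1⟩)
  exact ⟨ν', k2⟩

theorem sim_iff (P : List Ins) (q0 qh : ℕ) :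
    entails (Fp P q0 qh) (RS ++ TR) [aG] ↔ ∃ X Y, RB P q0 qh X Y :=
  ⟨sim_sound, sim_complete⟩


/-! ## Simulating Post-Turing machines by two-stack machines -/

set_option linter.unusedSimpArgs false

section Sim

open Turing

variable {Γ Λ : Type} [Inhabited Γ] [Inhabited Λ]

def mainS (φ : Λ → ℕ) (q : Λ) : ℕ := 4 * φ q + 2
def l1S (φ : Λ → ℕ) (q : Λ) : ℕ := 4 * φ q + 3
def l2S (φ : Λ → ℕ) (q : Λ) : ℕ := 4 * φ q + 4

def actI (φ : Λ → ℕ) (ψ : PointedMap Γ ℕ) (q : Λ) (a : Γ) : Option (Λ × TM0.Stmt Γ) → Ins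
  | none => (mainS φ q, ψ a, ψ a, 1, 0)
  | some (p, .move .right) => (mainS φ q, ψ a, ψ a, mainS φ p, 0)
  | some (p, .move .left) => (mainS φ q, ψ a, ψ a, 0, l1S φ p)
  | some (p, .write b) => (mainS φ q, ψ a, ψ b, 0, l2S φ p)

def insQA (M : TM0.Machine Γ Λ) (φ : Λ → ℕ) (ψ : PointedMap Γ ℕ) (q : Λ) (a : Γ) : List Ins :=
  [actI φ ψ q a (M q a), (l1S φ q, ψ a, ψ a, l2S φ q, 0), (l2S φ q, ψ a, ψ a, 0, mainS φ q)]

noncomputable def Pfix [Fintype Γ] (M : TM0.Machine Γ Λ) (S : Finset Λ) (φ : Λ → ℕ)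
    (ψ : PointedMap Γ ℕ) : List Ins :=
  S.toList.flatMap fun q => (Finset.univ : Finset Γ).toList.flatMap fun a => insQA M φ ψ q a

def initP (c0 c1 c2 md m : ℕ) : List Ins :=
  (List.range (m + 1)).map (fun i => (4 * i + 5, 0, if i < m then c2 else c1, 4 * (i + 1) + 5, 0))
    ++ [(4 * (m + 1) + 5, 0, c0, 0, md)]

def Yi (c1 c2 m : ℕ) : ℕ → ListBlank ℕ
  | 0 => default
  | i + 1 => (Yi c1 c2 m i).cons (if i < m then c2 else c1)

theorem Yi_le (c1 c2 m : ℕ) : ∀ i ≤ m, Yi c1 c2 m i = ListBlank.mk (List.replicate i c2)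
  | 0, _ => rfl
  | i + 1, h => by
    rw [Yi, Yi_le c1 c2 m i (by omega), if_pos (by omega), List.replicate_succ]
    rfl

theorem Yi_last (c1 c2 m : ℕ) :
    Yi c1 c2 m (m + 1) = ListBlank.mk (c1 :: List.replicate m c2) := by
  rw [Yi, Yi_le c1 c2 m m le_rfl, if_neg (by omega)]
  rfl

def cX (ψ : PointedMap Γ ℕ) (c : TM0.Cfg Γ Λ) : ListBlank ℕ :=
  (c.Tape.right.map ψ).cons (ψ c.Tape.head)
def cY (ψ : PointedMap Γ ℕ) (c : TM0.Cfg Γ Λ) : ListBlank ℕ := c.Tape.left.map ψ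

theorem mem_Pfix [Fintype Γ] {M : TM0.Machine Γ Λ} {S : Finset Λ} {φ : Λ → ℕ}
    {ψ : PointedMap Γ ℕ} {i : Ins} :
    i ∈ Pfix M S φ ψ ↔ ∃ q ∈ S, ∃ a, i ∈ insQA M φ ψ q a := by
  simp [Pfix, List.mem_flatMap]

def Inv (M : TM0.Machine Γ Λ) (S : Finset Λ) (φ : Λ → ℕ) (ψ : PointedMap Γ ℕ)
    (c1 c2 m : ℕ) (l : List Γ) (n : ℕ) (X Y : ListBlank ℕ) : Prop :=
  (n = 1 → ∃ c, TM0.Reaches M (TM0.init l) c ∧ TM0.step M c = none) ∧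
  (∀ q ∈ S, n = mainS φ q → ∃ c, TM0.Reaches M (TM0.init l) c ∧ c.q = q ∧ X = cX ψ c ∧ Y = cY ψ c) ∧
  (∀ q ∈ S, n = l1S φ q → ∃ c, TM0.Reaches M (TM0.init l) c ∧ c.q = q ∧
    cX ψ c = (Y.cons X.head).cons X.tail.head ∧ cY ψ c = X.tail.tail) ∧
  (∀ q ∈ S, n = l2S φ q → ∃ c, TM0.Reaches M (TM0.init l) c ∧ c.q = q ∧
    cX ψ c = Y.cons X.head ∧ cY ψ c = X.tail) ∧
  (∀ i, n = 4 * i + 5 → X = default ∧ Y = Yi c1 c2 m i)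

section
variable {M : TM0.Machine Γ Λ} {S : Finset Λ} {φ : Λ → ℕ} {ψ : PointedMap Γ ℕ}
  {c1 c2 m : ℕ} {l : List Γ}

theorem Inv_dead (X Y : ListBlank ℕ) : Inv M S φ ψ c1 c2 m l 0 X Y := by
  refine ⟨?_, ?_, ?_, ?_, ?_⟩ <;> intros <;> simp_all [mainS, l1S, l2S]

theorem Inv_halt (X Y : ListBlank ℕ)
    (h : ∃ c, TM0.Reaches M (TM0.init l) c ∧ TM0.step M c = none) :
    Inv M S φ ψ c1 c2 m l 1 X Y := by
  refine ⟨fun _ => h, ?_, ?_, ?_, ?_⟩ <;> intros <;> first | omega | (simp only [mainS, l1S, l2S] at *; omega)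

theorem Inv_main (hφ : Set.InjOn φ (S : Set Λ)) {q : Λ} (hq : q ∈ S) {X Y : ListBlank ℕ}
    (h : ∃ c, TM0.Reaches M (TM0.init l) c ∧ c.q = q ∧ X = cX ψ c ∧ Y = cY ψ c) :
    Inv M S φ ψ c1 c2 m l (mainS φ q) X Y := by
  refine ⟨?_, ?_, ?_, ?_, ?_⟩
  · intro h1; simp only [mainS] at h1; omega
  · intro p hp e
    have : q = p := hφ hq hp (by simp only [mainS] at e; omega)
    exact this ▸ h
  all_goals intros; simp only [mainS, l1S, l2S] at *; omega

theorem Inv_l1 (hφ : Set.InjOn φ (S : Set Λ)) {q : Λ} (hq : q ∈ S) {X Y : ListBlank ℕ}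
    (h : ∃ c, TM0.Reaches M (TM0.init l) c ∧ c.q = q ∧
      cX ψ c = (Y.cons X.head).cons X.tail.head ∧ cY ψ c = X.tail.tail) :
    Inv M S φ ψ c1 c2 m l (l1S φ q) X Y := by
  refine ⟨?_, ?_, ?_, ?_, ?_⟩
  · intro h1; simp only [l1S] at h1; omega
  · intros; simp only [mainS, l1S, l2S] at *; omega
  · intro p hp e
    have : q = p := hφ hq hp (by simp only [l1S] at e; omega)
    exact this ▸ h
  all_goals intros; simp only [mainS, l1S, l2S] at *; omega

theorem Inv_l2 (hφ : Set.InjOn φ (S : Set Λ)) {q : Λ} (hq : q ∈ S) {X Y : ListBlank ℕ}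
    (h : ∃ c, TM0.Reaches M (TM0.init l) c ∧ c.q = q ∧
      cX ψ c = Y.cons X.head ∧ cY ψ c = X.tail) :
    Inv M S φ ψ c1 c2 m l (l2S φ q) X Y := by
  refine ⟨?_, ?_, ?_, ?_, ?_⟩
  · intro h1; simp only [l2S] at h1; omega
  · intros; simp only [mainS, l1S, l2S] at *; omega
  · intros; simp only [mainS, l1S, l2S] at *; omega
  · intro p hp e
    have : q = p := hφ hq hp (by simp only [l2S] at e; omega)
    exact this ▸ h
  · intros; simp only [mainS, l1S, l2S] at *; omega

theorem Inv_init {i : ℕ} {X Y : ListBlank ℕ} (h : X = default ∧ Y = Yi c1 c2 m i) :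
    Inv M S φ ψ c1 c2 m l (4 * i + 5) X Y := by
  refine ⟨?_, ?_, ?_, ?_, ?_⟩
  · intro h1; omega
  · intros; simp only [mainS, l1S, l2S] at *; omega
  · intros; simp only [mainS, l1S, l2S] at *; omega
  · intros; simp only [mainS, l1S, l2S] at *; omega
  · intro j e
    have : i = j := by omega
    exact this ▸ h

theorem cX_init (s0 s1 s2 : Γ) (m : ℕ) :
    cX ψ (TM0.init ([s0, s1] ++ List.replicate m s2) : TM0.Cfg Γ Λ) =
      (Yi (ψ s1) (ψ s2) m (m + 1)).cons (ψ s0) := by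
  rw [Yi_last]
  simp [cX, TM0.init, Tape.mk₁, Tape.mk₂, Tape.mk', ListBlank.map_mk]

theorem cY_init (l : List Γ) : cY ψ (TM0.init l : TM0.Cfg Γ Λ) = default := by
  simp only [cY, TM0.init, Tape.mk₁, Tape.mk₂, Tape.mk', ListBlank.map_mk]
  rfl

theorem reach_tail {x y z : TM0.Cfg Γ Λ} (h : TM0.Reaches M x y) (h' : z ∈ TM0.step M y) :
    TM0.Reaches M x z := Relation.ReflTransGen.tail h h'

/-- One step of the stack machine preserves the invariant. -/
theorem Inv_step [Fintype Γ] (hS : TM0.Supports M (S : Set Λ)) (hφ : Set.InjOn φ (S : Set Λ))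
    (hψ : Function.Injective ψ) {s0 s1 s2 : Γ} {m : ℕ} {q a b q1 q2 : ℕ} {X Y : ListBlank ℕ}
    (h : Inv M S φ ψ (ψ s1) (ψ s2) m ([s0, s1] ++ List.replicate m s2) q (X.cons a) Y)
    (hi : (q, a, b, q1, q2) ∈ Pfix M S φ ψ ++
      initP (ψ s0) (ψ s1) (ψ s2) (mainS φ (default : Λ)) m) :
    Inv M S φ ψ (ψ s1) (ψ s2) m ([s0, s1] ++ List.replicate m s2) q1 X (Y.cons b) ∧
    Inv M S φ ψ (ψ s1) (ψ s2) m ([s0, s1] ++ List.replicate m s2) q2 (Y.cons b) X := by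
  rw [List.mem_append, mem_Pfix] at hi
  rcases hi with ⟨p, hp, d, hi⟩ | hi
  · simp only [insQA, List.mem_cons, List.not_mem_nil, or_false] at hi
    rcases hi with hi | hi | hi
    · have key : q = mainS φ p → a = ψ d → ∃ R L, TM0.Reaches M
          (TM0.init ([s0, s1] ++ List.replicate m s2)) ⟨p, ⟨d, L, R⟩⟩ ∧
          X = R.map ψ ∧ Y = L.map ψ := by
        intro hq ha
        obtain ⟨⟨q', ⟨d', L, R⟩⟩, hc, rfl, hX, hY⟩ := h.2.1 p hp hq
        obtain ⟨h1, h2⟩ := cons_inj hX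
        have : d' = d := hψ (h1.symm.trans ha)
        subst this
        exact ⟨R, L, hc, h2, hY⟩
      rcases hM : M p d with - | ⟨p', dir | w⟩
      · rw [hM] at hi
        simp only [actI, Prod.mk.injEq] at hi
        obtain ⟨rfl, rfl, rfl, rfl, rfl⟩ := hi
        obtain ⟨R, L, hc, -, -⟩ := key rfl rfl
        refine ⟨Inv_halt _ _ ⟨_, hc, ?_⟩, Inv_dead _ _⟩
        simp [TM0.step, hM]
      · have hp' : p' ∈ S := hS.2 (show (p', _) ∈ M p d by rw [hM]; rfl) hp
        cases dir
        · rw [hM] at hi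
          simp only [actI, Prod.mk.injEq] at hi
          obtain ⟨rfl, rfl, rfl, rfl, rfl⟩ := hi
          obtain ⟨R, L, hc, rfl, rfl⟩ := key rfl rfl
          refine ⟨Inv_dead _ _, Inv_l1 hφ hp' ⟨⟨p', ⟨L.head, L.tail, R.cons d⟩⟩,
            reach_tail hc ?_, rfl, ?_, ?_⟩⟩
          · simp [TM0.step, hM, Tape.move]
          · simp [cX]
          · simp [cY]
        · rw [hM] at hi
          simp only [actI, Prod.mk.injEq] at hi
          obtain ⟨rfl, rfl, rfl, rfl, rfl⟩ := hi
          obtain ⟨R, L, hc, rfl, rfl⟩ := key rfl rfl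
          refine ⟨Inv_main hφ hp' ⟨⟨p', ⟨R.head, L.cons d, R.tail⟩⟩,
            reach_tail hc ?_, rfl, ?_, ?_⟩, Inv_dead _ _⟩
          · simp [TM0.step, hM, Tape.move]
          · rw [cX, ← ListBlank.tail_map, ← ListBlank.head_map, ListBlank.cons_head_tail]
          · simp [cY]
      · have hp' : p' ∈ S := hS.2 (show (p', _) ∈ M p d by rw [hM]; rfl) hp
        rw [hM] at hi
        simp only [actI, Prod.mk.injEq] at hi
        obtain ⟨rfl, rfl, rfl, rfl, rfl⟩ := hi
        obtain ⟨R, L, hc, rfl, rfl⟩ := key rfl rfl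
        refine ⟨Inv_dead _ _, Inv_l2 hφ hp' ⟨⟨p', ⟨w, L, R⟩⟩,
          reach_tail hc ?_, rfl, ?_, ?_⟩⟩
        · simp [TM0.step, hM, Tape.write]
        · simp [cX]
        · simp [cY]
    · simp only [Prod.mk.injEq] at hi
      obtain ⟨rfl, rfl, rfl, rfl, rfl⟩ := hi
      obtain ⟨c, hc, hq, h1, h2⟩ := h.2.2.1 p hp rfl
      exact ⟨Inv_l2 hφ hp ⟨c, hc, hq, by simpa using h1, by simpa using h2⟩, Inv_dead _ _⟩
    · simp only [Prod.mk.injEq] at hi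
      obtain ⟨rfl, rfl, rfl, rfl, rfl⟩ := hi
      obtain ⟨c, hc, hq, h1, h2⟩ := h.2.2.2.1 p hp rfl
      exact ⟨Inv_dead _ _, Inv_main hφ hp ⟨c, hc, hq, by simpa using h1.symm, by simpa using h2.symm⟩⟩
  · simp only [initP, List.mem_append, List.mem_map, List.mem_range, List.mem_singleton,
      Prod.mk.injEq] at hi
    rcases hi with ⟨i, hi, rfl, rfl, rfl, rfl, rfl⟩ | ⟨rfl, rfl, rfl, rfl, rfl⟩
    · obtain ⟨h1, rfl⟩ := h.2.2.2.2 i rfl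
      have hX : X = default := (cons_inj (h1.trans default_cons.symm)).2
      exact ⟨Inv_init ⟨hX, rfl⟩, Inv_dead _ _⟩
    · obtain ⟨h1, rfl⟩ := h.2.2.2.2 (m + 1) rfl
      have hX : X = default := (cons_inj (h1.trans default_cons.symm)).2
      refine ⟨Inv_dead _ _, Inv_main hφ hS.1 ⟨_, Relation.ReflTransGen.refl, rfl, ?_, ?_⟩⟩
      · rw [cX_init]
      · rw [cY_init, hX]

theorem RB_Inv [Fintype Γ] (hS : TM0.Supports M (S : Set Λ)) (hφ : Set.InjOn φ (S : Set Λ))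
    (hψ : Function.Injective ψ) {s0 s1 s2 : Γ} {m : ℕ} {q : ℕ} {X Y : ListBlank ℕ}
    (h : RB (Pfix M S φ ψ ++ initP (ψ s0) (ψ s1) (ψ s2) (mainS φ (default : Λ)) m) 5 q X Y) :
    Inv M S φ ψ (ψ s1) (ψ s2) m ([s0, s1] ++ List.replicate m s2) q X Y := by
  induction h with
  | init => exact Inv_init (i := 0) ⟨rfl, rfl⟩
  | keep _ hi ih => exact (Inv_step hS hφ hψ ih hi).1
  | swap _ hi ih => exact (Inv_step hS hφ hψ ih hi).2

theorem RB_init_states {P : List Ins} {c0 c1 c2 md m : ℕ} :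
    ∀ i ≤ m + 1, RB (P ++ initP c0 c1 c2 md m) 5 (4 * i + 5) default (Yi c1 c2 m i)
  | 0, _ => RB.init
  | i + 1, h => by
    have ih := RB_init_states (P := P) (c0 := c0) (c1 := c1) (c2 := c2) (md := md) (m := m) i (by omega)
    rw [← default_cons] at ih
    refine RB.keep (a := 0) (q2 := 0) ih ?_
    refine List.mem_append_right _ (List.mem_append_left _ ?_)
    exact List.mem_map.2 ⟨i, List.mem_range.2 (by omega), rfl⟩

theorem RB_reach [Fintype Γ] (hS : TM0.Supports M (S : Set Λ)) {s0 s1 s2 : Γ} {m : ℕ}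
    {c : TM0.Cfg Γ Λ} (h : TM0.Reaches M (TM0.init ([s0, s1] ++ List.replicate m s2)) c) :
    c.q ∈ S ∧ RB (Pfix M S φ ψ ++ initP (ψ s0) (ψ s1) (ψ s2) (mainS φ (default : Λ)) m) 5
      (mainS φ c.q) (cX ψ c) (cY ψ c) := by
  induction h with
  | refl =>
    refine ⟨hS.1, ?_⟩
    rw [cX_init, cY_init]
    have h := RB_init_states (P := Pfix M S φ ψ) (c0 := ψ s0) (c1 := ψ s1) (c2 := ψ s2)
      (md := mainS φ (default : Λ)) (m + 1) le_rfl
    rw [← default_cons] at h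
    refine RB.swap (a := 0) (q1 := 0) h ?_
    exact List.mem_append_right _ (List.mem_append_right _ (List.mem_singleton.2 rfl))
  | @tail c c' _ hs ih =>
    obtain ⟨hq, ih⟩ := ih
    have hq' : c'.q ∈ S := TM0.step_supports M hS hs hq
    refine ⟨hq', ?_⟩
    obtain ⟨q, ⟨d, L, R⟩⟩ := c
    have mem : ∀ q ∈ S, ∀ a, ∀ i ∈ insQA M φ ψ q a, i ∈ Pfix M S φ ψ ++
        initP (ψ s0) (ψ s1) (ψ s2) (mainS φ (default : Λ)) m :=
      fun q hq a i hi => List.mem_append_left _ (mem_Pfix.2 ⟨q, hq, a, hi⟩)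
    have l2 : ∀ p ∈ S, ∀ (Z : ListBlank Γ) (Y : ListBlank ℕ), RB (Pfix M S φ ψ ++
        initP (ψ s0) (ψ s1) (ψ s2) (mainS φ (default : Λ)) m) 5 (l2S φ p) (Z.map ψ) Y →
        RB (Pfix M S φ ψ ++ initP (ψ s0) (ψ s1) (ψ s2) (mainS φ (default : Λ)) m) 5
          (mainS φ p) (Y.cons (ψ Z.head)) (Z.tail.map ψ) := by
      intro p hp Z Y h
      rw [← ListBlank.cons_head_tail Z, ListBlank.map_cons] at h
      exact RB.swap (q1 := 0) h (mem p hp Z.head _ (by simp [insQA]))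
    have l1 : ∀ p ∈ S, ∀ (Z : ListBlank Γ) (Y : ListBlank ℕ), RB (Pfix M S φ ψ ++
        initP (ψ s0) (ψ s1) (ψ s2) (mainS φ (default : Λ)) m) 5 (l1S φ p) (Z.map ψ) Y →
        RB (Pfix M S φ ψ ++ initP (ψ s0) (ψ s1) (ψ s2) (mainS φ (default : Λ)) m) 5
          (l2S φ p) (Z.tail.map ψ) (Y.cons (ψ Z.head)) := by
      intro p hp Z Y h
      rw [← ListBlank.cons_head_tail Z, ListBlank.map_cons] at h
      exact RB.keep (q2 := 0) h (mem p hp Z.head _ (by simp [insQA]))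
    have act := mem q hq d (actI φ ψ q d (M q d)) (by simp [insQA])
    rcases hM : M q d with - | ⟨p', dir | w⟩
    · simp [TM0.step, hM] at hs
    · rw [hM] at act
      cases dir
      · simp only [TM0.step, hM, Option.map_some, Option.mem_def, Option.some.injEq] at hs
        subst hs
        have h1 := RB.swap ih act
        have h2 := l2 p' hq' _ _ (l1 p' hq' (L.cons d) _ (by simpa [cY] using h1))
        simpa [cX, cY, Tape.move] using h2
      · simp only [TM0.step, hM, Option.map_some, Option.mem_def, Option.some.injEq] at hs
        subst hs
        have h1 := RB.keep ih act
        simp only [cX, cY, Tape.move]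
        rw [← ListBlank.tail_map, ← ListBlank.head_map, ListBlank.cons_head_tail,
          ListBlank.map_cons]
        exact h1
    · rw [hM] at act
      simp only [TM0.step, hM, Option.map_some, Option.mem_def, Option.some.injEq] at hs
      subst hs
      have h1 := RB.swap ih act
      have h2 := l2 p' hq' (L.cons w) _ (by simpa [cY] using h1)
      simpa [cX, cY, Tape.write] using h2

theorem RB_iff [Fintype Γ] (hS : TM0.Supports M (S : Set Λ)) (hφ : Set.InjOn φ (S : Set Λ))
    (hψ : Function.Injective ψ) (s0 s1 s2 : Γ) (m : ℕ) :
    (∃ X Y, RB (Pfix M S φ ψ ++ initP (ψ s0) (ψ s1) (ψ s2) (mainS φ (default : Λ)) m) 5 1 X Y) ↔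
      (TM0.eval M ([s0, s1] ++ List.replicate m s2)).Dom := by
  have e : (TM0.eval M ([s0, s1] ++ List.replicate m s2)).Dom ↔
      ∃ c, TM0.Reaches M (TM0.init ([s0, s1] ++ List.replicate m s2)) c ∧ TM0.step M c = none := by
    rw [TM0.eval, Part.map_Dom, Part.dom_iff_mem]
    exact exists_congr fun c => StateTransition.mem_eval
  rw [e]
  constructor
  · rintro ⟨X, Y, h⟩
    exact (RB_Inv hS hφ hψ h).1 rfl
  · rintro ⟨⟨q, ⟨d, L, R⟩⟩, hc, hn⟩
    obtain ⟨hq, h⟩ := RB_reach (φ := φ) (ψ := ψ) hS hc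
    have act : actI φ ψ q d (M q d) ∈ Pfix M S φ ψ ++
        initP (ψ s0) (ψ s1) (ψ s2) (mainS φ (default : Λ)) m :=
      List.mem_append_left _ (mem_Pfix.2 ⟨q, hq, d, by simp [insQA]⟩)
    have hM : M q d = none := by simpa [TM0.step] using hn
    rw [hM] at act
    exact ⟨_, _, RB.keep h act⟩

end

end Sim

theorem exists_PM (Γ : Type) [Inhabited Γ] [Fintype Γ] :
    ∃ ψ : Turing.PointedMap Γ ℕ, Function.Injective ψ := by
  classical
  let e := Fintype.equivFin Γ
  refine ⟨⟨fun a => if a = default then 0 else (e a : ℕ) + 1, by simp⟩, ?_⟩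
  intro a b h
  have h' : (if a = default then 0 else (e a : ℕ) + 1) =
    (if b = default then 0 else (e b : ℕ) + 1) := h
  split_ifs at h' with h1 h2
  · rw [h1, h2]
  · exact e.injective (Fin.ext (by omega))

theorem exists_injS {Λ : Type} (S : Finset Λ) : ∃ φ : Λ → ℕ, Set.InjOn φ (S : Set Λ) :=
  Set.countable_iff_exists_injOn.1 S.countable_toSet


/-! ## A universal Turing machine and the final reduction -/

section Univ

open Turing

def uf (v : ℕ) : Part ℕ :=
  (Nat.rfind fun i => Part.some (decide (2 ^ i = v))).bind fun m =>
    Nat.Partrec.Code.eval (Denumerable.ofNat Nat.Partrec.Code m) 0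

theorem uf_partrec : Partrec uf := by
  refine Partrec.bind (Partrec.rfind ?_) ?_
  · have hp : Primrec₂ (fun (a b : ℕ) => a ^ b) :=
      Primrec₂.unpaired'.1 Nat.Primrec.pow
    have h : Primrec₂ (fun (v i : ℕ) => decide (2 ^ i = v)) :=
      PrimrecPred.decide (Primrec.eq.comp (hp.comp (Primrec.const 2) Primrec.snd) Primrec.fst)
    exact h.to_comp.partrec₂
  · exact (Nat.Partrec.Code.eval_part.comp
      ((Computable.ofNat Nat.Partrec.Code).comp Computable.snd) (Computable.const 0))

theorem uf_dom (m : ℕ) : (uf (2 ^ m)).Dom ↔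
    (Nat.Partrec.Code.eval (Denumerable.ofNat Nat.Partrec.Code m) 0).Dom := by
  have h : m ∈ Nat.rfind (fun i => Part.some (decide (2 ^ i = 2 ^ m))) := by
    refine Nat.mem_rfind.2 ?_
    constructor
    · simp
    · intro k hk
      have : 2 ^ k ≠ 2 ^ m := fun e => hk.ne (Nat.pow_right_injective le_rfl e)
      simp [this]
  rw [uf, Part.eq_some_iff.2 h, Part.bind_some]

theorem exists_ucode : ∃ c : ToPartrec.Code, ∀ m, (c.eval [2 ^ m]).Dom ↔
    (Nat.Partrec.Code.eval (Denumerable.ofNat Nat.Partrec.Code m) 0).Dom := by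
  obtain ⟨c, hc⟩ := ToPartrec.Code.exists_code (Nat.Partrec'.part_iff₁.2 uf_partrec)
  refine ⟨c, fun m => ?_⟩
  have := hc (2 ^ m ::ᵥ List.Vector.nil)
  rw [← uf_dom]
  have e : c.eval [2 ^ m] = pure <$> uf (2 ^ m) := this
  rw [e]
  simp

theorem cast_two_pow (m : ℕ) : ∃ p : PosNum, ((2 ^ m : ℕ) : Num) = Num.pos p ∧
    PartrecToTM2.trPosNum p = List.replicate m PartrecToTM2.Γ'.bit0 ++ [PartrecToTM2.Γ'.bit1] := by
  induction m with
  | zero => exact ⟨1, by simp; rfl, rfl⟩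
  | succ m ih =>
    obtain ⟨p, h1, h2⟩ := ih
    refine ⟨p.bit0, ?_, ?_⟩
    · rw [pow_succ, mul_two, Nat.cast_add, h1, Num.bit0_of_bit0]
      rfl
    · rw [PartrecToTM2.trPosNum, h2, List.replicate_succ]
      rfl

theorem trList_two_pow (m : ℕ) : PartrecToTM2.trList [2 ^ m] =
    List.replicate m PartrecToTM2.Γ'.bit0 ++ [PartrecToTM2.Γ'.bit1, PartrecToTM2.Γ'.cons] := by
  obtain ⟨p, h1, h2⟩ := cast_two_pow m
  simp [PartrecToTM2.trNat, h1, PartrecToTM2.trNum, h2]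

/-- There is a finite Post-Turing machine with undecidable halting problem. -/
theorem exists_TM : ∃ (Γ Λ : Type) (_ : Inhabited Γ) (_ : Fintype Γ) (_ : Inhabited Λ)
    (M : TM0.Machine Γ Λ) (S : Finset Λ) (s0 s1 s2 : Γ), TM0.Supports M (S : Set Λ) ∧
    ∀ m, (TM0.eval M ([s0, s1] ++ List.replicate m s2)).Dom ↔
      (Nat.Partrec.Code.eval (Denumerable.ofNat Nat.Partrec.Code m) 0).Dom := by
  obtain ⟨c, hc⟩ := exists_ucode
  let _ : Fintype PartrecToTM2.K' := ⟨{.main, .rev, .aux, .stack}, by intro k; cases k <;> simp⟩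
  let _ : Inhabited PartrecToTM2.Λ' := ⟨PartrecToTM2.trNormal c PartrecToTM2.Cont'.halt⟩
  let M1 := TM2to1.tr PartrecToTM2.tr
  let smb : PartrecToTM2.Γ' → PartrecToTM2.K' → Option PartrecToTM2.Γ' :=
    fun a => Function.update (fun _ => none) PartrecToTM2.K'.main (some a)
  refine ⟨TM2to1.Γ' PartrecToTM2.K' (fun _ => PartrecToTM2.Γ'), TM1to0.Λ' M1, inferInstance,
    inferInstance, inferInstance, TM1to0.tr M1,
    TM1to0.trStmts M1 (TM2to1.trSupp PartrecToTM2.tr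
      (PartrecToTM2.codeSupp c PartrecToTM2.Cont'.halt)),
    (true, smb .cons), (false, smb .bit1), (false, smb .bit0),
    TM1to0.tr_supports _ (TM2to1.tr_supports _ (PartrecToTM2.tr_supports _ _)), fun m => ?_⟩
  rw [← hc, TM1to0.tr_eval]
  have e : [(true, smb .cons), (false, smb .bit1)] ++ List.replicate m (false, smb .bit0) =
      TM2to1.trInit (K := PartrecToTM2.K') (Γ := fun _ => PartrecToTM2.Γ')
        PartrecToTM2.K'.main (PartrecToTM2.trList [2 ^ m]) := by
    rw [trList_two_pow]
    have r : (List.replicate m PartrecToTM2.Γ'.bit0 ++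
        [PartrecToTM2.Γ'.bit1, PartrecToTM2.Γ'.cons]).reverse =
        PartrecToTM2.Γ'.cons :: PartrecToTM2.Γ'.bit1 :: List.replicate m PartrecToTM2.Γ'.bit0 := by
      simp
    unfold TM2to1.trInit
    rw [r]
    have r2 : List.map (fun a => ((false, smb a) : Bool × (PartrecToTM2.K' → _)))
        (List.replicate m PartrecToTM2.Γ'.bit0) = List.replicate m (false, smb .bit0) :=
      List.map_replicate
    rw [← r2]
    rfl
  have h1 := TM2to1.tr_eval_dom PartrecToTM2.tr PartrecToTM2.K'.main (PartrecToTM2.trList [2 ^ m])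
  rw [← e] at h1
  refine h1.trans ?_
  have h2 := PartrecToTM2.tr_eval c [2 ^ m]
  have h3 : (TM2.init PartrecToTM2.K'.main (PartrecToTM2.trList [2 ^ m]) :
      TM2.Cfg (fun _ : PartrecToTM2.K' => PartrecToTM2.Γ') PartrecToTM2.Λ'
        (Option PartrecToTM2.Γ')) = PartrecToTM2.init c [2 ^ m] := by
    simp only [TM2.init, PartrecToTM2.init]
    congr 1
    funext k
    cases k <;> simp [PartrecToTM2.K'.elim]
  have h4 : (TM2.eval PartrecToTM2.tr PartrecToTM2.K'.main (PartrecToTM2.trList [2 ^ m])).Dom ↔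
      (StateTransition.eval (TM2.step PartrecToTM2.tr) (PartrecToTM2.init c [2 ^ m])).Dom := by
    rw [← h3]
    rfl
  rw [h4, h2]
  rfl

end Univ

/-! ### Computability of the reduction -/

theorem fac_primrec (p : ℕ) {α : Type} [Primcodable α] {g : α → List ℕ} (hg : Primrec g) :
    Primrec fun x => fac p (g x) := by
  have h1 : Primrec FTerm.const := by
    have : Primrec fun n : ℕ => FTerm.equivSum.symm (Sum.inr n) :=
      (Primrec.of_equiv_symm (e := FTerm.equivSum)).comp Primrec.sumInr
    exact this
  have h2 : Primrec fun x => FAtom.equivProd.symm (p, (g x).map FTerm.const) :=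
    (Primrec.of_equiv_symm (e := FAtom.equivProd)).comp
      (Primrec.pair (Primrec.const p) (Primrec.list_map hg (h1.comp Primrec.snd).to₂))
  exact h2

theorem sy_primrec : Primrec sy :=
  Primrec.nat_add.comp (Primrec.const 4) (Primrec.nat_mul.comp (Primrec.const 2) Primrec.id)

theorem st_primrec : Primrec st :=
  Primrec.nat_add.comp (Primrec.const 5) (Primrec.nat_mul.comp (Primrec.const 2) Primrec.id)

theorem insF_primrec : Primrec insF := by
  have f1 : Primrec fun i : Ins => st i.1 := st_primrec.comp Primrec.fst
  have f2 : Primrec fun i : Ins => sy i.2.1 :=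
    sy_primrec.comp (Primrec.fst.comp Primrec.snd)
  have f3 : Primrec fun i : Ins => sy i.2.2.1 :=
    sy_primrec.comp (Primrec.fst.comp (Primrec.snd.comp Primrec.snd))
  have f4 : Primrec fun i : Ins => st i.2.2.2.1 :=
    st_primrec.comp (Primrec.fst.comp (Primrec.snd.comp (Primrec.snd.comp Primrec.snd)))
  have f5 : Primrec fun i : Ins => st i.2.2.2.2 :=
    st_primrec.comp (Primrec.snd.comp (Primrec.snd.comp (Primrec.snd.comp Primrec.snd)))
  have nl : Primrec fun _ : Ins => ([] : List ℕ) := Primrec.const _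
  have z : Primrec fun _ : Ins => 0 := Primrec.const _
  exact Primrec.list_cons.comp
    (fac_primrec 4 (Primrec.list_cons.comp f1 (Primrec.list_cons.comp f2 (Primrec.list_cons.comp f3
      (Primrec.list_cons.comp f4 (Primrec.list_cons.comp f5 (Primrec.list_cons.comp z nl)))))))
    (Primrec.list_cons.comp
      (fac_primrec 1 (Primrec.list_cons.comp z (Primrec.list_cons.comp f3 nl)))
    (Primrec.list_cons.comp
      (fac_primrec 1 (Primrec.list_cons.comp z (Primrec.list_cons.comp f4 nl)))
    (Primrec.list_cons.comp
      (fac_primrec 1 (Primrec.list_cons.comp z (Primrec.list_cons.comp f5 nl)))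
      (Primrec.const []))))

theorem initP_primrec (c0 c1 c2 md : ℕ) : Primrec (initP c0 c1 c2 md) := by
  have lin : Primrec fun i : ℕ => 4 * i + 5 :=
    Primrec.nat_add.comp (Primrec.nat_mul.comp (Primrec.const 4) Primrec.id) (Primrec.const 5)
  refine Primrec.list_append.comp (Primrec.list_map (Primrec.list_range.comp Primrec.succ) ?_) ?_
  · refine Primrec.pair (lin.comp Primrec.snd) (Primrec.pair (Primrec.const 0) (Primrec.pair ?_
      (Primrec.pair (lin.comp (Primrec.succ.comp Primrec.snd)) (Primrec.const 0))))
    exact Primrec.ite (Primrec.nat_lt.comp Primrec.snd Primrec.fst) (Primrec.const _)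
      (Primrec.const _)
  · exact Primrec.list_cons.comp (Primrec.pair (lin.comp Primrec.succ) (Primrec.const (0, c0, 0, md)))
      (Primrec.const [])

theorem Fp_primrec (P : List Ins) (c0 c1 c2 md q0 qh : ℕ) :
    Primrec fun m => Fp (P ++ initP c0 c1 c2 md m) q0 qh :=
  Primrec.list_append.comp (Primrec.const _) (Primrec.list_flatMap
    (Primrec.list_append.comp (Primrec.const P) (initP_primrec c0 c1 c2 md))
    (insF_primrec.comp Primrec.snd).to₂)

theorem TR_trans : ∀ t ∈ TR, isTransitivityRule t := by
  intro t ht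
  simp only [List.mem_cons, List.not_mem_nil, or_false] at ht
  rcases ht with rfl | rfl
  · exact ⟨2, 0, 1, 2, by decide, by decide, by decide, rfl, rfl⟩
  · exact ⟨3, 0, 1, 2, by decide, by decide, by decide, rfl, rfl⟩

theorem no_decider : ¬ ∃ f : List FAtom × List ERule × List ERule × FAtom → Bool, Computable f ∧
    ∀ F, isFactBase F → (f (F, RS, TR, aG) = true ↔ entails F (RS ++ TR) [aG]) := by
  rintro ⟨f, hf, hfe⟩
  obtain ⟨Γ, Λ, _, _, _, M, S, s0, s1, s2, hS, hM⟩ := exists_TM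
  obtain ⟨ψ, hψ⟩ := exists_PM Γ
  obtain ⟨φ, hφ⟩ := exists_injS S
  have hc : Computable fun m : ℕ => f (Fp (Pfix M S φ ψ ++
      initP (ψ s0) (ψ s1) (ψ s2) (mainS φ (default : Λ)) m) 5 1, RS, TR, aG) :=
    hf.comp (Computable.pair (Fp_primrec _ _ _ _ _ _ _).to_comp (Computable.const (RS, TR, aG)))
  apply ComputablePred.halting_problem 0
  rw [ComputablePred.computable_iff]
  refine ⟨fun c => f (Fp (Pfix M S φ ψ ++
      initP (ψ s0) (ψ s1) (ψ s2) (mainS φ (default : Λ)) (Encodable.encode c)) 5 1, RS, TR, aG),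
      hc.comp Computable.encode, ?_⟩
  funext c
  refine propext ?_
  rw [hfe _ (Fp_ground _ _ _), sim_iff, RB_iff hS hφ hψ, hM, Denumerable.ofNat_encode]

end UD

/-- Atomic CQ entailment is undecidable both over fus+trans and over
fes+trans knowledge bases: in each case there is no computable function that is correct
on all valid inputs (fact base, fus (resp. fes) rule set together with transitivity
rules, atomic CQ). -/
theorem fus_fes_plus_trans_atomicCQ_undecidable :
    (¬ ∃ f : List FAtom × List ERule × List ERule × FAtom → Bool, Computable f ∧
      ∀ (F : List FAtom) (Rs T : List ERule) (Q : FAtom),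
        isFactBase F → isFUS Rs → (∀ t ∈ T, isTransitivityRule t) →
        (f (F, Rs, T, Q) = true ↔ entails F (Rs ++ T) [Q])) ∧
    (¬ ∃ f : List FAtom × List ERule × List ERule × FAtom → Bool, Computable f ∧
      ∀ (F : List FAtom) (Rs T : List ERule) (Q : FAtom),
        isFactBase F → isFES Rs → (∀ t ∈ T, isTransitivityRule t) →
        (f (F, Rs, T, Q) = true ↔ entails F (Rs ++ T) [Q])) := by
  constructor
  · rintro ⟨f, hf, h⟩
    exact UD.no_decider ⟨f, hf, fun F hF => h F UD.RS UD.TR UD.aG hF UD.RS_FUS UD.TR_trans⟩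
  · rintro ⟨f, hf, h⟩
    exact UD.no_decider ⟨f, hf, fun F hF => h F UD.RS UD.TR UD.aG hF UD.RS_FES UD.TR_trans⟩
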